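/- arXiv:1909.12225 — 4 statements merged into one kernel-verified Lean document; each statement's English description precedes it below -/
import Mathlib

section
/- Let X be a compact metric space, n ≥ 1 an integer, and r > 0. Assume that for every point x of X the n-dimensional Hausdorff content of the closed metric ball B(x,r) is strictly less than (r/(4n))^n. Then UR_{n−1}(X) < r, i.e. there exist r' < r and a finite covering of X by open sets, each contained in a closed metric ball of radius r', such that no n+1 of the covering sets have a common point. -/
/-!
Put `s = r / (4n)` and induct on `n`, for totally bounded `Y ⊆ X` whose intersections with balls of
radius `4ns` centred on `Y` have content bounded uniformly below `s ^ n`; compactness supplies the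
uniform bound, because the content of `K ∩ closedBall x r` is upper semicontinuous in `x`.

For the step from `m` to `m + 1`, consider finite families `𝓦` of disjoint open sets in balls of
radius `R < 4(m+1)s` together with covers `S` of the remainder `Z = Y \ ⋃₀ 𝓦` by balls of radius
below `s`, and choose a pair with `∑ radius ^ m` almost minimal. Eilenberg's inequality yields, for
each `x ∈ Y`, a radius `ρ` between `4ms + 2s` and `R` such that the sphere of radius `ρ` about `x`
meets `Y` in a set of `m`-content below `s ^ m`. Making `ball x ρ` a new piece, cut out of the
others, trades the balls of `S` inside it for a cover of the sphere, so by minimality these balls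
have `∑ radius ^ m` uniformly below `s ^ m`. They include every ball of `S` that meets
`closedBall x (4ms)`, since radii are below `s`. Hence the induction hypothesis applies to `Z`, and
adding the disjoint sets `𝓦` to the resulting cover raises its multiplicity by at most one.
-/

open Metric Set
open scoped ENNReal NNReal

/-- The `m`-dimensional Hausdorff content of a subset `A` of a metric space `X`:
the infimum, over all countable coverings of `A` by closed metric balls of `X` with
radii `r_i`, of `∑ r_i ^ m`. -/
noncomputable def HC {X : Type*} [MetricSpace X] (m : ℝ) (A : Set X) : ℝ≥0∞ :=
  ⨅ (S : Set (X × ℝ≥0)) (_ : S.Countable)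
    (_ : A ⊆ ⋃ p ∈ S, Metric.closedBall p.1 (p.2 : ℝ)),
    ∑' p : S, ((p : X × ℝ≥0).2 : ℝ≥0∞) ^ m

/-! ### Ball covers -/

section BallSum

variable {X : Type*} {S T : Set (X × ℝ≥0)} {m : ℝ}

/-- The sum `∑ rᵢ ^ m` of a family of balls, encoded as a set of pairs (centre, radius). -/
noncomputable def ballSum (m : ℝ) (S : Set (X × ℝ≥0)) : ℝ≥0∞ :=
  ∑' p : S, (p.1.2 : ℝ≥0∞) ^ m

lemma ballSum_union_le : ballSum m (S ∪ T) ≤ ballSum m S + ballSum m T :=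
  ENNReal.tsum_union_le (fun p : X × ℝ≥0 ↦ (p.2 : ℝ≥0∞) ^ m) S T

lemma ballSum_sep_add_ballSum_sep_not (P : X × ℝ≥0 → Prop) :
    ballSum m {p ∈ S | P p} + ballSum m {p ∈ S | ¬ P p} = ballSum m S := by
  have hdisj : Disjoint {p ∈ S | P p} {p ∈ S | ¬ P p} :=
    disjoint_left.2 fun _ h h' ↦ h'.2 h.2
  have hunion : {p ∈ S | P p} ∪ {p ∈ S | ¬ P p} = S := by
    ext p
    simp only [mem_union, mem_ofPred_eq]
    tauto
  have hsum := ENNReal.summable.tsum_union_disjoint (f := fun p : X × ℝ≥0 ↦ (p.2 : ℝ≥0∞) ^ m)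
    hdisj ENNReal.summable
  rw [hunion] at hsum
  exact hsum.symm

lemma rpow_le_ballSum {p : X × ℝ≥0} (hp : p ∈ S) : (p.2 : ℝ≥0∞) ^ m ≤ ballSum m S :=
  ENNReal.le_tsum (f := fun p : S ↦ (p.1.2 : ℝ≥0∞) ^ m) ⟨p, hp⟩

lemma radius_lt_of_ballSum_lt (hm : 0 ≤ m) {s : ℝ≥0} (h : ballSum m S < (s : ℝ≥0∞) ^ m) :
    ∀ p ∈ S, p.2 < s := by
  intro p hp
  by_contra! hsp
  exact h.not_ge <|
    (ENNReal.rpow_le_rpow (ENNReal.coe_le_coe.2 hsp) hm).trans (rpow_le_ballSum hp)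

lemma lintegral_ballSum_sep_le (hm : 0 ≤ m) (hS : S.Countable) (f : X → ℝ) (L : ℝ≥0)
    (I : Set ℝ) :
    ∫⁻ ρ in I, ballSum m {p ∈ S | ρ ∈ closedBall (f p.1) (L * p.2)} ≤
      2 * L * ballSum (m + 1) S := by
  have : Countable S := hS
  let J : X × ℝ≥0 → Set ℝ := fun p ↦ closedBall (f p.1) (L * p.2)
  have hsum (ρ : ℝ) : ballSum m {p ∈ S | ρ ∈ J p} =
      ∑' p : S, (J p).indicator (fun _ ↦ (p.1.2 : ℝ≥0∞) ^ m) ρ := by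
    rw [ballSum, tsum_subtype _ fun p : X × ℝ≥0 ↦ (p.2 : ℝ≥0∞) ^ m,
      tsum_subtype S fun p ↦ (J p).indicator (fun _ ↦ (p.2 : ℝ≥0∞) ^ m) ρ]
    refine tsum_congr fun p ↦ ?_
    by_cases hp : p ∈ S <;> by_cases hρ : ρ ∈ J p <;> simp [hp, hρ]
  have hterm (p : S) : ∫⁻ ρ in I, (J p).indicator (fun _ ↦ (p.1.2 : ℝ≥0∞) ^ m) ρ ≤
      2 * L * (p.1.2 : ℝ≥0∞) ^ (m + 1) := by
    calc ∫⁻ ρ in I, (J p).indicator (fun _ ↦ (p.1.2 : ℝ≥0∞) ^ m) ρ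
      _ ≤ ∫⁻ ρ, (J p).indicator (fun _ ↦ (p.1.2 : ℝ≥0∞) ^ m) ρ :=
        MeasureTheory.setLIntegral_le_lintegral _ _
      _ = (p.1.2 : ℝ≥0∞) ^ m * (2 * (L * p.1.2)) := by
        rw [MeasureTheory.lintegral_indicator_const measurableSet_closedBall,
          Real.volume_closedBall, ENNReal.ofReal_mul zero_le_two, ENNReal.ofReal_mul L.coe_nonneg]
        simp only [ENNReal.ofReal_coe_nnreal, ENNReal.ofReal_ofNat]
      _ = 2 * L * (p.1.2 : ℝ≥0∞) ^ (m + 1) := by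
        rw [ENNReal.rpow_add_of_nonneg _ _ hm zero_le_one, ENNReal.rpow_one]
        ring
  calc ∫⁻ ρ in I, ballSum m {p ∈ S | ρ ∈ J p}
    _ = ∑' p : S, ∫⁻ ρ in I, (J p).indicator (fun _ ↦ (p.1.2 : ℝ≥0∞) ^ m) ρ := by
      simp only [hsum]
      exact MeasureTheory.lintegral_tsum fun p ↦
        (measurable_const.indicator measurableSet_closedBall).aemeasurable
    _ ≤ ∑' p : S, 2 * L * (p.1.2 : ℝ≥0∞) ^ (m + 1) := ENNReal.tsum_le_tsum hterm
    _ = 2 * L * ballSum (m + 1) S := ENNReal.tsum_mul_left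

end BallSum

section BallCover

variable {X : Type*} [PseudoMetricSpace X] {S T : Set (X × ℝ≥0)} {A B : Set X}

/-- A countable set of pairs (centre, radius) whose closed balls cover `A`: the coverings over
which the infimum defining `HC` is taken. -/
structure IsBallCover (S : Set (X × ℝ≥0)) (A : Set X) : Prop where
  countable : S.Countable
  subset : A ⊆ ⋃ p ∈ S, closedBall p.1 (p.2 : ℝ)

lemma IsBallCover.exists_mem (h : IsBallCover S A) {y : X} (hy : y ∈ A) :
    ∃ p ∈ S, y ∈ closedBall p.1 (p.2 : ℝ) := by
  simpa only [mem_iUnion, exists_prop] using h.subset hy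

lemma IsBallCover.sep (h : IsBallCover S A) (P : X × ℝ≥0 → Prop) (hBA : B ⊆ A)
    (hP : ∀ p ∈ S, ∀ y ∈ B, y ∈ closedBall p.1 (p.2 : ℝ) → P p) :
    IsBallCover {p ∈ S | P p} B where
  countable := h.countable.mono (sep_subset S P)
  subset y hy := by
    obtain ⟨p, hp, hyp⟩ := h.exists_mem (hBA hy)
    exact mem_iUnion₂.2 ⟨p, ⟨hp, hP p hp y hy hyp⟩, hyp⟩

lemma IsBallCover.union (hS : IsBallCover S A) (hT : IsBallCover T B) :
    IsBallCover (S ∪ T) (A ∪ B) where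
  countable := hS.countable.union hT.countable
  subset := by
    rw [biUnion_union]
    exact union_subset_union hS.subset hT.subset

lemma IsBallCover.mono (h : IsBallCover S A) (hBA : B ⊆ A) : IsBallCover S B :=
  ⟨h.countable, hBA.trans h.subset⟩

lemma exists_isBallCover {Y : Set X} (hY : TotallyBounded Y) (m : ℝ) {s : ℝ≥0} (hs : 0 < s) :
    ∃ S, IsBallCover S Y ∧ (∀ p ∈ S, p.2 < s) ∧ ballSum m S ≠ ∞ := by
  have hs2 : 0 < s / 2 := half_pos hs
  obtain ⟨c, hc, hYc⟩ := Metric.totallyBounded_iff.1 hY (s / 2 : ℝ≥0) hs2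
  refine ⟨(·, s / 2) '' c, ⟨(hc.image _).countable, ?_⟩, ?_, ?_⟩
  · rw [biUnion_image]
    exact hYc.trans (iUnion₂_mono fun _ _ ↦ ball_subset_closedBall)
  · rintro _ ⟨x, -, rfl⟩
    exact half_lt_self hs
  · have := (hc.image (·, s / 2)).fintype
    rw [ballSum, tsum_fintype, ENNReal.sum_ne_top]
    rintro ⟨_, x, -, rfl⟩ -
    exact ENNReal.rpow_ne_top_of_ne_zero (by simpa using hs.ne') ENNReal.coe_ne_top

lemma eventually_inter_closedBall_subset {K : Set X} (hK : IsCompact K) {x : X} {r : ℝ}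
    {U : Set X} (hU : IsOpen U) (h : K ∩ closedBall x r ⊆ U) :
    ∀ᶠ x' in nhds x, K ∩ closedBall x' r ⊆ U := by
  have hfar : ∀ᶠ x' in nhds x, ∀ y ∈ K \ U, r < dist y x' := by
    refine (hK.diff hU).eventually_forall_of_forall_eventually fun y hy ↦ ?_
    have hyr : r < dist y x := not_le.1 fun hle ↦ hy.2 (h ⟨hy.1, hle⟩)
    have hcont : Continuous fun z : X × X ↦ dist z.2 z.1 := by fun_prop
    exact hcont.continuousAt.eventually_const_lt hyr
  filter_upwards [hfar] with x' hx' y hy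
  by_contra hyU
  exact (hx' y ⟨hy.1, hyU⟩).not_ge hy.2

end BallCover

/-! ### Hausdorff content -/

section Content

variable {X : Type*} [MetricSpace X] {A K : Set X} {m : ℝ}

lemma HC_lt_iff {v : ℝ≥0∞} : HC m A < v ↔ ∃ S, IsBallCover S A ∧ ballSum m S < v := by
  simp only [HC, iInf_lt_iff, ballSum, exists_prop]
  exact exists_congr fun S ↦ ⟨fun ⟨h₁, h₂, h⟩ ↦ ⟨⟨h₁, h₂⟩, h⟩, fun ⟨⟨h₁, h₂⟩, h⟩ ↦ ⟨h₁, h₂, h⟩⟩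

lemma IsBallCover.HC_le {S : Set (X × ℝ≥0)} (h : IsBallCover S A) : HC m A ≤ ballSum m S :=
  le_of_forall_gt fun _ hv ↦ HC_lt_iff.2 ⟨S, h, hv⟩

lemma HC_mono {B : Set X} (h : A ⊆ B) : HC m A ≤ HC m B :=
  le_of_forall_gt fun _ hv ↦
    let ⟨S, hS, hSv⟩ := HC_lt_iff.1 hv
    HC_lt_iff.2 ⟨S, hS.mono h, hSv⟩

lemma eq_empty_of_HC_zero_lt_one (h : HC 0 A < 1) : A = ∅ := by
  obtain ⟨S, hS, hS1⟩ := HC_lt_iff.1 h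
  refine eq_empty_of_forall_notMem fun y hy ↦ ?_
  obtain ⟨p, hp, -⟩ := hS.exists_mem hy
  exact hS1.not_ge (by simpa only [ENNReal.rpow_zero] using rpow_le_ballSum (m := 0) hp)

lemma HC_le_tsum {ι : Type*} [Countable ι] {c : ι → X} {ρ : ι → ℝ≥0}
    (h : A ⊆ ⋃ i, closedBall (c i) (ρ i)) : HC m A ≤ ∑' i, (ρ i : ℝ≥0∞) ^ m := by
  let f : ι → X × ℝ≥0 := fun i ↦ (c i, ρ i)
  have hcov : IsBallCover (range f) A := ⟨countable_range f, by rwa [biUnion_range]⟩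
  calc HC m A ≤ ballSum m (range f) := hcov.HC_le
    _ = ∑' p : range f, (ρ (rangeSplitting f p) : ℝ≥0∞) ^ m :=
      tsum_congr fun p ↦ by rw [← apply_rangeSplitting f p]
    _ ≤ ∑' i, (ρ i : ℝ≥0∞) ^ m :=
      ENNReal.tsum_comp_le_tsum_of_injective (rangeSplitting_injective f) _

lemma exists_isOpen_superset_HC_lt {v : ℝ≥0∞} (h : HC m A < v) :
    ∃ U, IsOpen U ∧ A ⊆ U ∧ HC m U < v := by
  obtain ⟨S, hS, hSv⟩ := HC_lt_iff.1 h
  have : Countable S := hS.countable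
  obtain ⟨ε, hε, hεv⟩ := ENNReal.exists_pos_sum_of_countable' (tsub_pos_of_lt hSv).ne' S
  have henlarge (p : S) : ∃ q, p.1.2 < q ∧ (q : ℝ≥0∞) ^ m < (p.1.2 : ℝ≥0∞) ^ m + ε p := by
    have hcont : Continuous fun q : ℝ≥0 ↦ (q : ℝ≥0∞) ^ m :=
      ENNReal.continuous_rpow_const.comp ENNReal.continuous_coe
    have hlt : (p.1.2 : ℝ≥0∞) ^ m < (p.1.2 : ℝ≥0∞) ^ m + ε p :=
      ENNReal.lt_add_right ((rpow_le_ballSum p.2).trans_lt hSv).ne_top (hε p).ne'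
    have hnear : ∀ᶠ q : ℝ≥0 in nhdsWithin p.1.2 (Ioi p.1.2),
        (q : ℝ≥0∞) ^ m < (p.1.2 : ℝ≥0∞) ^ m + ε p :=
      hcont.continuousWithinAt.eventually_lt_const hlt
    exact (eventually_mem_nhdsWithin.and hnear).exists
  choose q hq hqε using henlarge
  refine ⟨⋃ p : S, ball p.1.1 (q p), isOpen_iUnion fun _ ↦ isOpen_ball, fun y hy ↦ ?_, ?_⟩
  · obtain ⟨p, hp, hyp⟩ := hS.exists_mem hy
    exact mem_iUnion.2 ⟨⟨p, hp⟩, closedBall_subset_ball (NNReal.coe_lt_coe.2 (hq ⟨p, hp⟩)) hyp⟩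
  · calc HC m (⋃ p : S, ball p.1.1 (q p)) ≤ ∑' p, (q p : ℝ≥0∞) ^ m :=
          HC_le_tsum (iUnion_mono fun _ ↦ ball_subset_closedBall)
      _ ≤ ∑' p : S, ((p.1.2 : ℝ≥0∞) ^ m + ε p) := ENNReal.tsum_le_tsum fun p ↦ (hqε p).le
      _ = ballSum m S + ∑' p, ε p := ENNReal.tsum_add
      _ < v := lt_tsub_iff_left.1 hεv

lemma upperSemicontinuous_HC_inter_closedBall (hK : IsCompact K) (m r : ℝ) :
    UpperSemicontinuous fun x ↦ HC m (K ∩ closedBall x r) := by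
  intro x v hv
  obtain ⟨U, hU, hsub, hUv⟩ := exists_isOpen_superset_HC_lt hv
  filter_upwards [eventually_inter_closedBall_subset hK hU hsub] with x' hx'
  exact (HC_mono hx').trans_lt hUv

lemma exists_lt_forall_HC_inter_closedBall_le (hK : IsCompact K) {r : ℝ} {v : ℝ≥0∞}
    (hv : 0 < v) (h : ∀ x ∈ K, HC m (K ∩ closedBall x r) < v) :
    ∃ t < v, ∀ x ∈ K, HC m (K ∩ closedBall x r) ≤ t := by
  obtain rfl | hne := K.eq_empty_or_nonempty
  · exact ⟨0, hv, by simp⟩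
  · obtain ⟨x, hx, hmax⟩ := UpperSemicontinuousOn.exists_isMaxOn hne hK
      ((upperSemicontinuous_HC_inter_closedBall hK m r).upperSemicontinuousOn K)
    exact ⟨_, h x hx, fun y hy ↦ hmax hy⟩

/-! ### Eilenberg's inequality -/

lemma lintegral_HC_inter_preimage_le {f : X → ℝ} {L : ℝ≥0} (hf : LipschitzWith L f) (hL : L ≠ 0)
    (hm : 0 ≤ m) (I : Set ℝ) :
    ∫⁻ ρ in I, HC m (A ∩ f ⁻¹' {ρ}) ≤ 2 * L * HC (m + 1) A := by
  have hbound {S : Set (X × ℝ≥0)} (hS : IsBallCover S A) :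
      ∫⁻ ρ in I, HC m (A ∩ f ⁻¹' {ρ}) ≤ 2 * L * ballSum (m + 1) S := by
    refine le_trans (MeasureTheory.lintegral_mono fun ρ ↦ ?_)
      (lintegral_ballSum_sep_le hm hS.countable f L I)
    refine (hS.sep _ inter_subset_left ?_).HC_le
    rintro p - y ⟨-, rfl⟩ hyp
    exact hf.dist_le_mul_of_le hyp
  have hL₀ : (2 * L : ℝ≥0∞) ≠ 0 := by simpa using hL
  have hL' : (2 * L : ℝ≥0∞) ≠ ∞ := by finiteness
  rw [← ENNReal.div_le_iff' hL₀ hL']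
  refine le_of_forall_gt fun v hv ↦ ?_
  obtain ⟨S, hS, hSv⟩ := HC_lt_iff.1 hv
  exact (ENNReal.div_le_of_le_mul' (hbound hS)).trans_lt hSv

lemma exists_HC_inter_sphere_lt (x : X) (hm : 0 ≤ m) {a b : ℝ} {u : ℝ≥0∞}
    (h : 2 * HC (m + 1) A < u * ENNReal.ofReal (b - a)) :
    ∃ ρ ∈ Icc a b, HC m (A ∩ sphere x ρ) < u := by
  by_contra! hlarge
  refine h.not_ge ?_
  calc u * ENNReal.ofReal (b - a) = ∫⁻ _ in Icc a b, u := by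
        rw [MeasureTheory.setLIntegral_const, Real.volume_Icc]
    _ ≤ ∫⁻ ρ in Icc a b, HC m (A ∩ (dist · x) ⁻¹' {ρ}) :=
      MeasureTheory.setLIntegral_mono' measurableSet_Icc hlarge
    _ ≤ 2 * HC (m + 1) A := by
      simpa using lintegral_HC_inter_preimage_le (LipschitzWith.dist_left x) one_ne_zero hm _

end Content

/-! ### Urysohn families -/

section UrysohnFamily

variable {X : Type*} [PseudoMetricSpace X] {n n' : ℕ} {R R' : ℝ} {𝓤 𝓦 : Set (Set X)}

/-- A finite family of open sets of multiplicity at most `n`, each contained in a closed ball of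
radius `R`. The condition `UR_{n-1}(Y) < r` says that such a family with `R < r` covers `Y`. -/
structure IsUrysohnFamily (n : ℕ) (R : ℝ) (𝓤 : Set (Set X)) : Prop where
  finite : 𝓤.Finite
  isOpen : ∀ U ∈ 𝓤, IsOpen U
  exists_subset_closedBall : ∀ U ∈ 𝓤, ∃ c, U ⊆ closedBall c R
  encard_le : ∀ x, {U ∈ 𝓤 | x ∈ U}.encard ≤ n

namespace IsUrysohnFamily

lemma empty (n : ℕ) (R : ℝ) : IsUrysohnFamily n R (∅ : Set (Set X)) where
  finite := finite_empty
  isOpen := by simp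
  exists_subset_closedBall := by simp
  encard_le := by simp

lemma mono_radius (h : IsUrysohnFamily n R 𝓤) (hR : R ≤ R') : IsUrysohnFamily n R' 𝓤 where
  __ := h
  exists_subset_closedBall U hU :=
    (h.exists_subset_closedBall U hU).imp fun _ hc ↦ hc.trans (closedBall_subset_closedBall hR)

lemma union (h𝓤 : IsUrysohnFamily n R 𝓤) (h𝓦 : IsUrysohnFamily n' R 𝓦) :
    IsUrysohnFamily (n + n') R (𝓤 ∪ 𝓦) where
  finite := h𝓤.finite.union h𝓦.finite
  isOpen U hU := hU.elim (h𝓤.isOpen U) (h𝓦.isOpen U)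
  exists_subset_closedBall U hU :=
    hU.elim (h𝓤.exists_subset_closedBall U) (h𝓦.exists_subset_closedBall U)
  encard_le x := by
    calc {U ∈ 𝓤 ∪ 𝓦 | x ∈ U}.encard
      _ = ({U ∈ 𝓤 | x ∈ U} ∪ {U ∈ 𝓦 | x ∈ U}).encard :=
        congrArg encard <| by ext; exact or_and_right
      _ ≤ {U ∈ 𝓤 | x ∈ U}.encard + {U ∈ 𝓦 | x ∈ U}.encard := encard_union_le _ _
      _ ≤ (n + n' : ℕ) := by
        push_cast
        exact add_le_add (h𝓤.encard_le x) (h𝓦.encard_le x)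

lemma exists_fin_param (h : IsUrysohnFamily n R 𝓤) :
    ∃ (k : ℕ) (U : Fin k → Set X), range U = 𝓤 ∧ ∀ x, {i | x ∈ U i}.encard ≤ n := by
  obtain ⟨k, U, hU, rfl⟩ := h.finite.fin_param
  refine ⟨k, U, rfl, fun x ↦ ?_⟩
  rw [← hU.encard_image]
  refine (encard_le_encard ?_).trans (h.encard_le x)
  rintro _ ⟨i, hi, rfl⟩
  exact ⟨mem_range_self i, hi⟩

end IsUrysohnFamily

/-- The ball about `x` added to a family as a new member and cut out of all the others. -/
def carve (𝓦 : Set (Set X)) (x : X) (ρ : ℝ) : Set (Set X) :=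
  insert (ball x ρ) ((· \ closedBall x ρ) '' 𝓦)

lemma encard_carve_le (hn : 1 ≤ n) (h : ∀ y, {W ∈ 𝓦 | y ∈ W}.encard ≤ n) (x : X) (ρ : ℝ) (y : X) :
    {W ∈ carve 𝓦 x ρ | y ∈ W}.encard ≤ n := by
  by_cases hy : y ∈ ball x ρ
  · have hsub : {W ∈ carve 𝓦 x ρ | y ∈ W} ⊆ {ball x ρ} := by
      rintro _ ⟨rfl | ⟨W, -, rfl⟩, hyW⟩
      · rfl
      · exact absurd (ball_subset_closedBall hy) hyW.2
    calc {W ∈ carve 𝓦 x ρ | y ∈ W}.encard ≤ ({ball x ρ} : Set (Set X)).encard :=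
          encard_le_encard hsub
      _ = 1 := encard_singleton _
      _ ≤ n := by exact_mod_cast hn
  · have hsub : {W ∈ carve 𝓦 x ρ | y ∈ W} ⊆ (· \ closedBall x ρ) '' {W ∈ 𝓦 | y ∈ W} := by
      rintro _ ⟨rfl | ⟨W, hW, rfl⟩, hyW⟩
      · exact absurd hyW hy
      · exact ⟨W, ⟨hW, hyW.1⟩, rfl⟩
    exact (encard_le_encard hsub).trans ((encard_image_le _ _).trans (h y))

lemma IsUrysohnFamily.carve (h : IsUrysohnFamily n R 𝓦) (hn : 1 ≤ n) (x : X) {ρ : ℝ}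
    (hρ : ρ ≤ R) : IsUrysohnFamily n R (carve 𝓦 x ρ) where
  finite := (h.finite.image _).insert _
  isOpen := by
    rintro _ (rfl | ⟨W, hW, rfl⟩)
    · exact isOpen_ball
    · exact (h.isOpen W hW).sdiff isClosed_closedBall
  exists_subset_closedBall := by
    rintro _ (rfl | ⟨W, hW, rfl⟩)
    · exact ⟨x, ball_subset_closedBall.trans (closedBall_subset_closedBall hρ)⟩
    · exact (h.exists_subset_closedBall W hW).imp fun _ hc ↦ sdiff_subset.trans hc
  encard_le := encard_carve_le hn h.encard_le x ρ

lemma sdiff_sUnion_carve_subset (Y : Set X) (𝓦 : Set (Set X)) (x : X) (ρ : ℝ) :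
    Y \ ⋃₀ carve 𝓦 x ρ ⊆ (Y \ ⋃₀ 𝓦) \ ball x ρ ∪ Y ∩ sphere x ρ := by
  rintro y ⟨hyY, hy⟩
  have hball : y ∉ ball x ρ := fun h ↦ hy ⟨_, mem_insert _ _, h⟩
  by_cases hsphere : y ∈ sphere x ρ
  · exact Or.inr ⟨hyY, hsphere⟩
  · have hclosed : y ∉ closedBall x ρ := fun h ↦
      (ball_union_sphere.symm.subset h).elim hball hsphere
    refine Or.inl ⟨⟨hyY, ?_⟩, hball⟩
    rintro ⟨W, hW, hyW⟩
    exact hy ⟨_, mem_insert_of_mem _ ⟨W, hW, rfl⟩, hyW, hclosed⟩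

end UrysohnFamily

/-! ### Almost minimal separations -/

section Separation

variable {X : Type*} [PseudoMetricSpace X] {Y : Set X} {R : ℝ} {s : ℝ≥0} {𝓦 : Set (Set X)}
  {S G : Set (X × ℝ≥0)} {m : ℝ} {ε : ℝ≥0∞} {x : X} {ρ : ℝ}

/-- Disjoint open sets `𝓦` in balls of radius `R`, with a cover `S` of the remainder `Y \ ⋃₀ 𝓦`,
which separates them in `Y`, by balls of radius less than `s`. -/
structure IsSeparation (Y : Set X) (R : ℝ) (s : ℝ≥0) (𝓦 : Set (Set X)) (S : Set (X × ℝ≥0)) :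
    Prop where
  isUrysohnFamily : IsUrysohnFamily 1 R 𝓦
  isBallCover : IsBallCover S (Y \ ⋃₀ 𝓦)
  radius_lt : ∀ p ∈ S, p.2 < s

/-- A separation whose `ballSum` is finite and within `ε` of the least possible one. -/
structure IsAlmostMinimal (m : ℝ) (ε : ℝ≥0∞) (Y : Set X) (R : ℝ) (s : ℝ≥0) (𝓦 : Set (Set X))
    (S : Set (X × ℝ≥0)) : Prop extends IsSeparation Y R s 𝓦 S where
  ballSum_ne_top : ballSum m S ≠ ∞
  ballSum_le : ∀ 𝓦' S', IsSeparation Y R s 𝓦' S' → ballSum m S ≤ ballSum m S' + ε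

lemma exists_isAlmostMinimal (hY : TotallyBounded Y) (m R : ℝ) (hs : 0 < s) (hε : ε ≠ 0) :
    ∃ 𝓦 S, IsAlmostMinimal m ε Y R s 𝓦 S := by
  let sums : Set ℝ≥0∞ := {v | ∃ 𝓦 S, IsSeparation Y R s 𝓦 S ∧ ballSum m S = v}
  obtain ⟨S₀, hS₀, hS₀s, hS₀m⟩ := exists_isBallCover hY m hs
  have hmem : ballSum m S₀ ∈ sums :=
    ⟨∅, S₀, ⟨.empty 1 R, hS₀.mono sdiff_subset, hS₀s⟩, rfl⟩
  have hfin : sInf sums ≠ ∞ := ne_top_of_le_ne_top hS₀m (sInf_le hmem)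
  obtain ⟨_, ⟨𝓦, S, hsep, rfl⟩, hlt⟩ := sInf_lt_iff.1 (ENNReal.lt_add_right hfin hε)
  refine ⟨𝓦, S, hsep, hlt.ne_top, fun 𝓦' S' hsep' ↦ hlt.le.trans ?_⟩
  gcongr
  exact sInf_le ⟨𝓦', S', hsep', rfl⟩

lemma IsSeparation.carve (h : IsSeparation Y R s 𝓦 S) (hρ : ρ ≤ R)
    (hG : IsBallCover G (Y ∩ sphere x ρ)) (hGs : ∀ p ∈ G, p.2 < s) :
    IsSeparation Y R s (carve 𝓦 x ρ)
      ({p ∈ S | ¬ closedBall p.1 (p.2 : ℝ) ⊆ ball x ρ} ∪ G) where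
  isUrysohnFamily := h.isUrysohnFamily.carve le_rfl x hρ
  isBallCover := by
    have hout : IsBallCover {p ∈ S | ¬ closedBall p.1 (p.2 : ℝ) ⊆ ball x ρ}
        ((Y \ ⋃₀ 𝓦) \ ball x ρ) :=
      h.isBallCover.sep _ sdiff_subset fun p _ y hy hyp hsub ↦ hy.2 (hsub hyp)
    exact (hout.union hG).mono (sdiff_sUnion_carve_subset Y 𝓦 x ρ)
  radius_lt p hp := hp.elim (fun h' ↦ h.radius_lt p h'.1) (hGs p)

lemma IsAlmostMinimal.ballSum_inside_le (h : IsAlmostMinimal m ε Y R s 𝓦 S) (hρ : ρ ≤ R)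
    (hG : IsBallCover G (Y ∩ sphere x ρ)) (hGs : ∀ p ∈ G, p.2 < s) :
    ballSum m {p ∈ S | closedBall p.1 (p.2 : ℝ) ⊆ ball x ρ} ≤ ballSum m G + ε := by
  set inside := {p ∈ S | closedBall p.1 (p.2 : ℝ) ⊆ ball x ρ}
  set outside := {p ∈ S | ¬ closedBall p.1 (p.2 : ℝ) ⊆ ball x ρ}
  have hsplit : ballSum m inside + ballSum m outside = ballSum m S :=
    ballSum_sep_add_ballSum_sep_not _
  have hfin : ballSum m outside ≠ ∞ :=
    ne_top_of_le_ne_top h.ballSum_ne_top (hsplit ▸ le_add_self)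
  refine ENNReal.le_of_add_le_add_right hfin ?_
  calc ballSum m inside + ballSum m outside = ballSum m S := hsplit
    _ ≤ ballSum m (outside ∪ G) + ε := h.ballSum_le _ _ (h.toIsSeparation.carve hρ hG hGs)
    _ ≤ ballSum m outside + ballSum m G + ε := by gcongr; exact ballSum_union_le
    _ = ballSum m G + ε + ballSum m outside := by ring

lemma IsSeparation.isBallCover_inside (h : IsSeparation Y R s 𝓦 S) {a : ℝ}
    (hρ : a + 2 * s ≤ ρ) :
    IsBallCover {p ∈ S | closedBall p.1 (p.2 : ℝ) ⊆ ball x ρ} ((Y \ ⋃₀ 𝓦) ∩ closedBall x a) := by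
  refine h.isBallCover.sep _ inter_subset_left fun p hp y hy hyp z hz ↦ ?_
  have hps : (p.2 : ℝ) < s := NNReal.coe_lt_coe.2 (h.radius_lt p hp)
  have hyx : dist y x ≤ a := hy.2
  have hzy : dist z y ≤ p.2 + p.2 := dist_triangle_right z y p.1 |>.trans (add_le_add hz hyp)
  calc dist z x ≤ dist z y + dist y x := dist_triangle z y x
    _ < ρ := by linarith

end Separation

/-! ### Induction on the dimension -/

section Induction

variable {X : Type*} [MetricSpace X] {Y : Set X} {s : ℝ≥0} {t : ℝ≥0∞}

lemma exists_two_mul_lt_mul {m : ℝ} (hm : 0 ≤ m) (ht : t < (s : ℝ≥0∞) ^ (m + 1)) :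
    ∃ u < (s : ℝ≥0∞) ^ m, ∃ w < 2 * s, 2 * t < u * (w : ℝ≥0∞) := by
  by_contra! hle
  refine ht.not_ge ?_
  have hmul : (s : ℝ≥0∞) ^ m * (2 * s) ≤ 2 * t := by
    refine ENNReal.mul_le_of_forall_lt fun u hu w hw ↦ ?_
    lift w to ℝ≥0 using hw.ne_top
    exact hle u hu w (by exact_mod_cast hw)
  rw [ENNReal.rpow_add_of_nonneg _ _ hm zero_le_one, ENNReal.rpow_one]
  rwa [mul_left_comm, ENNReal.mul_le_mul_iff_right two_ne_zero ENNReal.ofNat_ne_top] at hmul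

lemma exists_isUrysohnFamily_HC_sdiff_le {m : ℝ} (hm : 0 ≤ m) (hs : 0 < s)
    (hY : TotallyBounded Y) (ht : t < (s : ℝ≥0∞) ^ (m + 1)) {a : ℝ}
    (h : ∀ x ∈ Y, HC (m + 1) (Y ∩ closedBall x (a + 4 * s)) ≤ t) :
    ∃ R < a + 4 * s, ∃ 𝓦, IsUrysohnFamily 1 R 𝓦 ∧
      ∃ u < (s : ℝ≥0∞) ^ m, ∀ x ∈ Y, HC m ((Y \ ⋃₀ 𝓦) ∩ closedBall x a) ≤ u := by
  obtain ⟨u, hu, w, hw, htuw⟩ := exists_two_mul_lt_mul hm ht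
  obtain ⟨u', huu', hu'⟩ := exists_between hu
  have : (w : ℝ) < 2 * s := by exact_mod_cast hw
  obtain ⟨𝓦, S, hmin⟩ :=
    exists_isAlmostMinimal hY m (a + 2 * s + w) hs (tsub_pos_of_lt huu').ne'
  refine ⟨a + 2 * s + w, by linarith, 𝓦, hmin.isUrysohnFamily, u', hu', fun x hx ↦ ?_⟩
  obtain ⟨ρ, ⟨haρ, hρR⟩, hρ⟩ : ∃ ρ ∈ Icc (a + 2 * s) (a + 2 * s + w),
      HC m (Y ∩ closedBall x (a + 4 * s) ∩ sphere x ρ) < u := by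
    refine exists_HC_inter_sphere_lt x hm ?_
    calc 2 * HC (m + 1) (Y ∩ closedBall x (a + 4 * s)) ≤ 2 * t := by gcongr; exact h x hx
      _ < u * w := htuw
      _ = u * ENNReal.ofReal (a + 2 * s + w - (a + 2 * s)) := by simp
  obtain ⟨G, hG, hGu⟩ := HC_lt_iff.1 hρ
  have hsphere : Y ∩ sphere x ρ ⊆ Y ∩ closedBall x (a + 4 * s) ∩ sphere x ρ := fun y hy ↦
    ⟨⟨hy.1, closedBall_subset_closedBall (by linarith) (sphere_subset_closedBall hy.2)⟩, hy.2⟩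
  calc HC m ((Y \ ⋃₀ 𝓦) ∩ closedBall x a)
    _ ≤ ballSum m {p ∈ S | closedBall p.1 (p.2 : ℝ) ⊆ ball x ρ} :=
      (hmin.isBallCover_inside haρ).HC_le
    _ ≤ ballSum m G + (u' - u) :=
      hmin.ballSum_inside_le hρR (hG.mono hsphere) (radius_lt_of_ballSum_lt hm (hGu.trans hu))
    _ ≤ u + (u' - u) := by gcongr
    _ = u' := add_tsub_cancel_of_le huu'.le

theorem exists_isUrysohnFamily_of_HC_le (hs : 0 < s) (n : ℕ) (hY : TotallyBounded Y)
    (ht : t < (s : ℝ≥0∞) ^ (n : ℝ)) (h : ∀ x ∈ Y, HC n (Y ∩ closedBall x (4 * n * s)) ≤ t) :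
    ∃ R : ℝ, R < 4 * n * s ∧ ∃ 𝓤, IsUrysohnFamily n R 𝓤 ∧ Y ⊆ ⋃₀ 𝓤 := by
  induction n generalizing Y t with
  | zero =>
    refine ⟨-1, by simp, ∅, .empty 0 _, fun y hy ↦ ?_⟩
    have hlt : HC 0 (Y ∩ closedBall y 0) < 1 := by
      simpa using (h y hy).trans_lt ht
    have hmem : y ∈ Y ∩ closedBall y 0 := ⟨hy, mem_closedBall_self le_rfl⟩
    exact absurd hmem (eq_empty_iff_forall_notMem.1 (eq_empty_of_HC_zero_lt_one hlt) y)
  | succ n ih =>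
    have hradius : 4 * ((n + 1 : ℕ) : ℝ) * s = 4 * n * s + 4 * s := by
      push_cast
      ring
    rw [hradius] at h ⊢
    push_cast at ht h
    obtain ⟨R₁, hR₁, 𝓦, h𝓦, u, hu, hrest⟩ :=
      exists_isUrysohnFamily_HC_sdiff_le n.cast_nonneg hs hY ht h
    obtain ⟨R₂, hR₂, 𝓤, h𝓤, hcov⟩ :=
      ih (hY.subset sdiff_subset) hu fun x hx ↦ hrest x hx.1
    have : (0 : ℝ) < s := NNReal.coe_pos.2 hs
    refine ⟨max R₂ R₁, max_lt (by linarith) hR₁, 𝓤 ∪ 𝓦,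
      (h𝓤.mono_radius (le_max_left _ _)).union (h𝓦.mono_radius (le_max_right _ _)), ?_⟩
    rw [sUnion_union]
    exact sdiff_subset_iff.1 hcov |>.trans (union_comm _ _).subset

end Induction

theorem stmt0_general {X : Type*} [MetricSpace X] {K : Set X} (hK : IsCompact K)
    (n : ℕ) (hn : 1 ≤ n) (r : ℝ) (hr : 0 < r)
    (hball : ∀ x ∈ K, HC (n : ℝ) (K ∩ closedBall x r) < ENNReal.ofReal ((r / (4 * n)) ^ n)) :
    ∃ r' : ℝ, r' < r ∧ ∃ (k : ℕ) (U : Fin k → Set X),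
      (∀ i, IsOpen (U i)) ∧ (∀ x ∈ K, ∃ i, x ∈ U i) ∧
      (∀ i, ∃ c : X, U i ⊆ closedBall c r') ∧
      (∀ x : X, {i | x ∈ U i}.encard ≤ n) := by
  lift r to ℝ≥0 using hr.le
  have hs : 0 < r / (4 * n) := div_pos hr (by positivity)
  have hr_eq : 4 * n * ((r / (4 * n) : ℝ≥0) : ℝ) = r := by
    push_cast
    field_simp
  have hpow : ENNReal.ofReal ((r / (4 * n)) ^ n) = ((r / (4 * n) : ℝ≥0) : ℝ≥0∞) ^ (n : ℝ) := by
    rw [ENNReal.rpow_natCast, ← ENNReal.coe_pow, ← ENNReal.ofReal_coe_nnreal]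
    push_cast
    rfl
  rw [hpow] at hball
  obtain ⟨t, ht, hle⟩ :=
    exists_lt_forall_HC_inter_closedBall_le hK (by positivity) hball
  obtain ⟨r', hr', 𝓤, h𝓤, hcov⟩ :=
    exists_isUrysohnFamily_of_HC_le hs n hK.totallyBounded ht (by rwa [hr_eq])
  obtain ⟨k, U, rfl, hU⟩ := h𝓤.exists_fin_param
  exact ⟨r', hr_eq ▸ hr', k, U, fun i ↦ h𝓤.isOpen _ (mem_range_self i),
    fun x hx ↦ by simpa using hcov hx,
    fun i ↦ h𝓤.exists_subset_closedBall _ (mem_range_self i), hU⟩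

/-- If `X` is a compact metric space, `n ≥ 1`, `r > 0`, and every closed ball of radius `r`
has `n`-dimensional Hausdorff content less than `(r/(4n))^n`, then `UR_{n-1}(X) < r`:
there are `r' < r` and a finite open covering of `X` by sets contained in closed balls
of radius `r'` with multiplicity at most `n`. -/
theorem stmt0 {X : Type*} [MetricSpace X] [CompactSpace X]
    (n : ℕ) (hn : 1 ≤ n) (r : ℝ) (hr : 0 < r)
    (hball : ∀ x : X, HC (n : ℝ) (Metric.closedBall x r) <
      ENNReal.ofReal ((r / (4 * n)) ^ n)) :
    ∃ r' : ℝ, r' < r ∧ ∃ (k : ℕ) (U : Fin k → Set X),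
      (∀ i, IsOpen (U i)) ∧ (∀ x : X, ∃ i, x ∈ U i) ∧
      (∀ i, ∃ c : X, U i ⊆ Metric.closedBall c r') ∧
      (∀ x : X, {i | x ∈ U i}.encard ≤ n) := by
  simpa using stmt0_general isCompact_univ n hn r hr (by simpa using hball)
end

section
/- Let X be a boundedly compact metric space (all closed metric balls of X are compact), n ≥ 1 an integer, r > 0, and μ > 0. Assume that every closed metric ball B of radius r in X satisfies HC_n(B) ≤ (r/(8n))^n − μ. Then UR_{n−1}(X) < r, i.e. there exist r' < r and a covering of X by open sets, each contained in a closed metric ball of radius r', such that no n+1 of the covering sets have a common point. -/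
/-!
Let `(4 n + 2) h ≤ r`, as for `h = r / (8 n)`, and fix an `h`-net of `X` with finitely many points
in every ball. Choose a cover of `X` by small open balls that is locally minimal for the cost
`∑ R ^ n`. Exchanging its members inside a ball `B(x, r)` about a net point for a cheap cover of
`B(x, r)` shows that these members cost less than `h ^ n`.

The dimension is then lowered one step at a time. If the balls inside `B(x, a + 4 h)` have
`∑ R ^ (k + 1) < h ^ (k + 1)`, averaging over `s ∈ [a, a + 2 h]` gives a sphere of radius `s` about
`x` that crosses balls with `∑ R ^ k < h ^ k`. Label some of the balls by net points so that a ball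
labeled `x` lies in `B(x, r - 2 h)` and intersecting labeled balls have equal labels, and choose the
labeling locally minimal for the cost `∑ R ^ k` of the unlabeled balls. Labeling everything inside
the sphere by `x` and unlabeling the balls it crosses shows that the unlabeled balls inside
`B(x, a)` satisfy `∑ R ^ k < h ^ k`. After `n` steps the remaining balls satisfy `∑ R ^ 0 < 1`, so
there are none. For each of the `n` labelings the unions of the balls with a common label are
pairwise disjoint, hence all these unions together have multiplicity at most `n`.
-/

open Metric Set
open scoped ENNReal NNReal

/-! ### Local minimality and averaging -/

theorem exists_mem_forall_nonpos_of_moves {Ω ι M : Type*} [TopologicalSpace Ω] {A : Set Ω}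
    (hA : IsCompact A) (hne : A.Nonempty) {φ : ι → Ω → ℝ} (hφ : ∀ i, Continuous (φ i))
    {ψ : M → Ω → ℝ} (hψ : ∀ m, Continuous (ψ m)) (D : M → Finset ι)
    (move : ∀ m, ∀ f ∈ A, ∃ g ∈ A, ∀ E, D m ⊆ E →
      ∑ i ∈ E, φ i g + ψ m f ≤ ∑ i ∈ E, φ i f) :
    ∃ f ∈ A, ∀ m, ψ m f ≤ 0 := by
  classical
  suffices h : (A ∩ ⋂ m, {f | ψ m f ≤ 0}).Nonempty by
    obtain ⟨f, hf, hψf⟩ := h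
    exact ⟨f, hf, fun m => mem_iInter.1 hψf m⟩
  refine hA.inter_iInter_nonempty _ (fun m => isClosed_le (hψ m) continuous_const) fun u => ?_
  obtain ⟨f, hf, hmin⟩ := hA.exists_isMinOn hne
    (continuous_finsetSum (u.biUnion D) fun i _ => hφ i).continuousOn
  refine ⟨f, hf, mem_iInter₂.2 fun m hm => ?_⟩
  obtain ⟨g, hg, hfg⟩ := move m f hf
  have hgain := hfg (u.biUnion D) (Finset.subset_biUnion_of_mem D hm)
  have hfmin : ∑ i ∈ u.biUnion D, φ i f ≤ ∑ i ∈ u.biUnion D, φ i g := hmin hg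
  rw [mem_ofPred_eq]
  linarith

theorem isClosed_of_forall_finset_exists_eq {ι L : Type*} [TopologicalSpace L]
    [DiscreteTopology L] {A : Set (ι → L)}
    (hA : ∀ f, (∀ D : Finset ι, ∃ g ∈ A, ∀ i ∈ D, g i = f i) → f ∈ A) : IsClosed A := by
  refine isClosed_of_closure_subset fun f hf => hA f fun D => ?_
  obtain ⟨g, hg, hgA⟩ := mem_closure_iff.1 hf ((D : Set ι).pi fun i => {f i})
    (isOpen_set_pi D.finite_toSet fun i _ => isOpen_discrete _) fun _ _ => rfl
  exact ⟨g, hgA, hg⟩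

/- The total weight of `{i | K i (f i)}` may be infinite, so it cannot be minimized over `A`. For
finitely many `m`, however, `move` involves only the finitely many indices in `I m ∪ J m`, and
minimizing the weight over these gives the inequalities for those `m`; compactness of `A` then
gives them for all `m` at once. -/
open Classical in
theorem exists_mem_forall_sum_filter_le {ι L M : Type*} {A : Set (ι → L)} {C : ι → Set L}
    (hC : ∀ i, (C i).Finite) (hAC : ∀ f ∈ A, ∀ i, f i ∈ C i)
    (hA : ∀ f, (∀ D : Finset ι, ∃ g ∈ A, ∀ i ∈ D, g i = f i) → f ∈ A) (hne : A.Nonempty)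
    (K : ι → L → Prop) {w : ι → ℝ} (hw : ∀ i, 0 ≤ w i) (I J : M → Finset ι)
    (move : ∀ m, ∀ f ∈ A, ∃ g ∈ A, ∀ i, K i (g i) → i ∈ J m ∨ i ∉ I m ∧ K i (f i)) :
    ∃ f ∈ A, ∀ m, ∑ i ∈ I m with K i (f i), w i ≤ ∑ i ∈ J m, w i := by
  let _ : TopologicalSpace L := ⊥
  have : DiscreteTopology L := ⟨rfl⟩
  have hAcomp : IsCompact A := (isCompact_univ_pi fun i => (hC i).isCompact).of_isClosed_subset
    (isClosed_of_forall_finset_exists_eq hA) fun f hf i _ => hAC f hf i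
  let cost (i : ι) (f : ι → L) : ℝ := if K i (f i) then w i else 0
  have hcost : ∀ i, Continuous (cost i) := fun i =>
    (continuous_of_discreteTopology (f := fun l => if K i l then w i else 0)).comp
      (continuous_apply i)
  have hgain : ∀ m, ∀ f ∈ A, ∃ g ∈ A, ∀ E, I m ∪ J m ⊆ E →
      ∑ i ∈ E, cost i g + (∑ i ∈ I m, cost i f - ∑ i ∈ J m, w i) ≤ ∑ i ∈ E, cost i f := by
    intro m f hf
    obtain ⟨g, hg, hgf⟩ := move m f hf
    refine ⟨g, hg, fun E hE => ?_⟩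
    obtain ⟨hIE, hJE⟩ := Finset.union_subset_iff.1 hE
    have hpt : ∀ i ∈ E, cost i g + (if i ∈ I m then cost i f else 0) ≤
        cost i f + if i ∈ J m then w i else 0 := by
      intro i _
      have := hw i
      have := hgf i
      grind
    have hsum := Finset.sum_le_sum hpt
    simp only [Finset.sum_add_distrib, Finset.sum_ite_mem, Finset.inter_eq_right.2 hIE,
      Finset.inter_eq_right.2 hJE] at hsum
    linarith
  obtain ⟨f, hf, hle⟩ := exists_mem_forall_nonpos_of_moves hAcomp hne hcost
    (fun m => (continuous_finsetSum _ fun i _ => hcost i).sub continuous_const) _ hgain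
  refine ⟨f, hf, fun m => ?_⟩
  rw [Finset.sum_filter]
  exact sub_nonpos.1 (hle m)

open Classical in
theorem exists_mem_Icc_sum_filter_mem_Ioo_le {ι : Type*} (J : Finset ι) {l u w : ι → ℝ}
    (hlu : ∀ i ∈ J, l i ≤ u i) (hw : ∀ i ∈ J, 0 ≤ w i) {a b : ℝ} (hab : a < b) :
    ∃ s ∈ Icc a b, (b - a) * ∑ i ∈ J with s ∈ Ioo (l i) (u i), w i ≤
      ∑ i ∈ J, (u i - l i) * w i := by
  let f (i : ι) : ℝ → ℝ := (Ioo (l i) (u i)).indicator fun _ => w i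
  have hf : ∀ i, MeasureTheory.Integrable (f i) := fun i =>
    (MeasureTheory.integrable_indicator_iff measurableSet_Ioo).2
      (MeasureTheory.integrableOn_const measure_Ioo_lt_top.ne)
  obtain ⟨s, hs, hle⟩ := MeasureTheory.exists_le_setAverage (μ := MeasureTheory.volume)
    (s := Icc a b) (by simpa using hab) measure_Icc_lt_top.ne
    (MeasureTheory.integrable_finsetSum J fun i _ => (hf i).integrableOn)
  refine ⟨s, hs, ?_⟩
  have hfs : ∑ i ∈ J with s ∈ Ioo (l i) (u i), w i = ∑ i ∈ J, f i s := by
    simp only [Finset.sum_filter, f, indicator_apply]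
  have hint : ∀ i ∈ J, ∫ t in Icc a b, f i t ≤ (u i - l i) * w i := by
    intro i hi
    have h0 : 0 ≤ f i := fun t => indicator_nonneg (fun _ _ => hw i hi) t
    calc ∫ t in Icc a b, f i t ≤ ∫ t, f i t :=
          MeasureTheory.setIntegral_le_integral (hf i) (.of_forall h0)
      _ = (u i - l i) * w i := by
          simp [f, MeasureTheory.integral_indicator_const, hlu i hi]
  calc (b - a) * ∑ i ∈ J with s ∈ Ioo (l i) (u i), w i
      ≤ ∫ t in Icc a b, ∑ i ∈ J, f i t := by
        rw [MeasureTheory.setAverage_eq, Real.volume_real_Icc_of_le hab.le, smul_eq_mul,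
          inv_mul_eq_div, le_div_iff₀' (sub_pos.2 hab)] at hle
        rwa [hfs]
    _ = ∑ i ∈ J, ∫ t in Icc a b, f i t :=
        MeasureTheory.integral_finsetSum J fun i _ => (hf i).integrableOn
    _ ≤ ∑ i ∈ J, (u i - l i) * w i := Finset.sum_le_sum hint

/-! ### Nets and ball covers -/

/-- A family of points such that every ball contains only finitely many of its members. -/
def BoundedlyFinite {X ι : Type*} [PseudoMetricSpace X] (p : ι → X) : Prop :=
  ∀ x t, {i | dist x (p i) ≤ t}.Finite

theorem BoundedlyFinite.countable {X ι : Type*} [PseudoMetricSpace X] {p : ι → X}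
    (hp : BoundedlyFinite p) : Countable ι := by
  rcases isEmpty_or_nonempty ι with _ | ⟨⟨i₀⟩⟩
  · infer_instance
  have huniv : ⋃ n : ℕ, {i | dist (p i₀) (p i) ≤ n} = univ :=
    iUnion_eq_univ_iff.2 fun i => exists_nat_ge (dist (p i₀) (p i))
  exact countable_univ_iff.1 (huniv ▸ countable_iUnion fun n => (hp (p i₀) n).countable)

theorem BoundedlyFinite.iUnion_of_dist_le {X ι α : Type*} [PseudoMetricSpace X] {p : ι → X}
    (hp : BoundedlyFinite p) {G : ι → Finset α} {c : α → X} {C : ℝ}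
    (hG : ∀ i, ∀ q ∈ G i, dist (c q) (p i) ≤ C) :
    BoundedlyFinite fun q : ⋃ i, (G i : Set α) => c q := by
  intro x t
  refine (((hp x (t + C)).biUnion fun i _ => (G i).finite_toSet).preimage
    Subtype.val_injective.injOn).subset fun q hq => ?_
  obtain ⟨i, hi⟩ := mem_iUnion.1 q.2
  exact mem_biUnion ((dist_triangle _ _ _).trans (add_le_add hq (hG i q hi))) hi

theorem finite_of_isSeparated_of_totallyBounded {X : Type*} [PseudoEMetricSpace X] {ε : ℝ≥0}
    (hε : ε ≠ 0) {s : Set X} (hs : IsSeparated ε s) (hs' : TotallyBounded s) : s.Finite := by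
  obtain ⟨N, _, hN, hsN⟩ := exists_finite_isCover_of_totallyBounded (half_pos hε.bot_lt).ne' hs'
  have hpack : packingNumber ε s ≤ externalCoveringNumber (ε / 2) s := by
    simpa only [mul_div_cancel₀ ε (two_ne_zero' ℝ≥0)] using
      packingNumber_two_mul_le_externalCoveringNumber (ε / 2) s
  rw [← encard_lt_top_iff]
  calc s.encard ≤ packingNumber ε s := hs.encard_le_packingNumber subset_rfl
    _ ≤ externalCoveringNumber (ε / 2) s := hpack
    _ ≤ N.encard := hsN.externalCoveringNumber_le_encard
    _ < ⊤ := hN.encard_lt_top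

theorem exists_isSeparated_isCover_univ (X : Type*) [PseudoEMetricSpace X] (ε : ℝ≥0) :
    ∃ N : Set X, IsSeparated ε N ∧ IsCover ε univ N := by
  obtain ⟨N, hN⟩ := zorn_subset {N : Set X | IsSeparated ε N} fun c hc hchain =>
    ⟨⋃₀ c, (pairwise_sUnion hchain.directedOn).2 hc, fun s => subset_sUnion_of_mem⟩
  exact ⟨N, hN.prop, .of_maximal_isSeparated (by simpa using hN)⟩

theorem exists_boundedlyFinite_net (X : Type*) [PseudoMetricSpace X] [ProperSpace X] {h : ℝ}
    (hh : 0 < h) :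
    ∃ (ν : Type) (p : ν → X), BoundedlyFinite p ∧ ∀ y, ∃ x, dist y (p x) ≤ h := by
  obtain ⟨N, hsep, hcov⟩ := exists_isSeparated_isCover_univ X ⟨h, hh.le⟩
  have hfin : BoundedlyFinite ((↑) : N → X) := by
    intro x t
    have hball : (N ∩ closedBall x t).Finite :=
      finite_of_isSeparated_of_totallyBounded (ne_of_gt hh) (hsep.subset inter_subset_left)
        ((isCompact_closedBall x t).totallyBounded.subset inter_subset_right)
    refine (hball.preimage Subtype.val_injective.injOn).subset fun z hz => ⟨z.2, ?_⟩
    rwa [mem_closedBall, dist_comm]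
  have := hfin.countable
  let e := equivShrink.{0} N
  refine ⟨Shrink N, fun i => e.symm i, fun x t => (hfin x t).preimage e.symm.injective.injOn, ?_⟩
  intro y
  obtain ⟨z, hz, hyz⟩ := mem_iUnion₂.1 (hcov.subset_iUnion_closedBall (mem_univ y))
  have hyz' : dist y z ≤ h := mem_closedBall.1 hyz
  exact ⟨e ⟨z, hz⟩, by simpa only [Equiv.symm_apply_apply] using hyz'⟩

theorem exists_gt_rpow_lt {r : ℝ≥0} {m : ℝ} {b : ℝ≥0∞} (hb : (r : ℝ≥0∞) ^ m < b) :
    ∃ R : ℝ≥0, r < R ∧ (R : ℝ≥0∞) ^ m < b := by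
  have hcont : Continuous fun R : ℝ≥0 => (R : ℝ≥0∞) ^ m :=
    ENNReal.continuous_rpow_const.comp ENNReal.continuous_coe
  have hev := (hcont.tendsto r).eventually_lt_const hb
  obtain ⟨R, hR, hrR⟩ :=
    ((hev.filter_mono (nhdsWithin_le_nhds (s := Ioi r))).and self_mem_nhdsWithin).exists
  exact ⟨R, hrR, hR⟩

theorem exists_countable_ball_cover_of_HC_lt {X : Type*} [MetricSpace X] {A : Set X} {m : ℝ}
    {b : ℝ≥0∞} (hA : HC m A < b) :
    ∃ (S : Set (X × ℝ≥0)) (R : S → ℝ≥0), (∀ p, 0 < R p) ∧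
      A ⊆ ⋃ p : S, ball (p : X × ℝ≥0).1 (R p) ∧ ∑' p, (R p : ℝ≥0∞) ^ m < b := by
  simp only [HC, iInf_lt_iff] at hA
  obtain ⟨S, hS, hcov, hsum⟩ := hA
  have := hS.to_subtype
  obtain ⟨ε, hε, hεsum⟩ := ENNReal.exists_pos_sum_of_countable' (tsub_pos_of_lt hsum).ne' S
  have hterm : ∀ p : S, ((p : X × ℝ≥0).2 : ℝ≥0∞) ^ m ≠ ∞ :=
    ENNReal.ne_top_of_tsum_ne_top hsum.ne_top
  choose R hpR hRε using fun p : S =>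
    exists_gt_rpow_lt (ENNReal.lt_add_right (hterm p) (hε p).ne')
  refine ⟨S, R, fun p => (zero_le).trans_lt (hpR p), fun y hy => ?_, ?_⟩
  · obtain ⟨p, hp, hyp⟩ := mem_iUnion₂.1 (hcov hy)
    exact mem_iUnion.2 ⟨⟨p, hp⟩, closedBall_subset_ball (hpR ⟨p, hp⟩) hyp⟩
  · calc ∑' p, (R p : ℝ≥0∞) ^ m
        ≤ ∑' p : S, (((p : X × ℝ≥0).2 : ℝ≥0∞) ^ m + ε p) :=
          ENNReal.tsum_le_tsum fun p => (hRε p).le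
      _ = ∑' p : S, ((p : X × ℝ≥0).2 : ℝ≥0∞) ^ m + ∑' p : S, ε p := ENNReal.tsum_add
      _ < b := by
          rw [add_comm]
          exact lt_tsub_iff_right.1 hεsum

theorem exists_finset_ball_cover_of_HC_lt {X : Type*} [MetricSpace X] {K : Set X}
    (hK : IsCompact K) {m : ℝ} {b : ℝ≥0∞} (hKb : HC m K < b) :
    ∃ G : Finset (X × ℝ≥0), (∀ q ∈ G, 0 < q.2 ∧ (ball q.1 q.2 ∩ K).Nonempty) ∧
      K ⊆ ⋃ q ∈ G, ball q.1 q.2 ∧ ∑ q ∈ G, (q.2 : ℝ≥0∞) ^ m < b := by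
  classical
  obtain ⟨S, R, hR, hcov, hsum⟩ := exists_countable_ball_cover_of_HC_lt hKb
  obtain ⟨t, ht⟩ := hK.elim_finite_subcover _ (fun _ => isOpen_ball) hcov
  let G := t.image fun p : S => ((p : X × ℝ≥0).1, R p)
  refine ⟨{q ∈ G | (ball q.1 q.2 ∩ K).Nonempty}, fun q hq => ?_, fun y hy => ?_, ?_⟩
  · obtain ⟨hqG, hqK⟩ := Finset.mem_filter.1 hq
    obtain ⟨p, _, rfl⟩ := Finset.mem_image.1 hqG
    exact ⟨hR p, hqK⟩
  · obtain ⟨p, hp, hyp⟩ := mem_iUnion₂.1 (ht hy)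
    exact mem_biUnion (Finset.mem_filter.2 ⟨Finset.mem_image_of_mem _ hp, y, hyp, hy⟩) hyp
  · calc ∑ q ∈ G with (ball q.1 q.2 ∩ K).Nonempty, (q.2 : ℝ≥0∞) ^ m
        ≤ ∑ q ∈ G, (q.2 : ℝ≥0∞) ^ m := Finset.sum_le_sum_of_subset (Finset.filter_subset _ _)
      _ ≤ ∑ p ∈ t, (R p : ℝ≥0∞) ^ m :=
          Finset.sum_image_le_of_nonneg (f := fun q : X × ℝ≥0 => (q.2 : ℝ≥0∞) ^ m)
            fun _ _ => zero_le
      _ ≤ ∑' p, (R p : ℝ≥0∞) ^ m := ENNReal.sum_le_tsum t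
      _ < b := hsum

theorem sum_pow_lt_of_sum_rpow_lt_ofReal {α : Type*} {G : Finset α} {R : α → ℝ≥0} {n : ℕ} {b : ℝ}
    (hG : ∑ q ∈ G, (R q : ℝ≥0∞) ^ (n : ℝ) < ENNReal.ofReal b) :
    ∑ q ∈ G, (R q : ℝ) ^ n < b := by
  simp only [ENNReal.rpow_natCast] at hG
  rw [ENNReal.lt_ofReal_iff_toReal_lt hG.ne_top] at hG
  simpa [ENNReal.toReal_sum] using hG

/-! ### Labelings of families of small balls -/

/-- A family of open balls of radii less than `h` in `X`, indexed by `ι`, with only finitely many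
centers in every bounded region. -/
structure SmallBalls (X ι : Type*) [PseudoMetricSpace X] (h : ℝ) where
  center : ι → X
  radius : ι → ℝ
  radius_pos : ∀ i, 0 < radius i
  radius_lt : ∀ i, radius i < h
  boundedlyFinite_center : BoundedlyFinite center

namespace SmallBalls

variable {X ι ν : Type*} [PseudoMetricSpace X] {h : ℝ} (B : SmallBalls X ι h)

/-- The `i`-th ball of the family, as a set. -/
def ball (i : ι) : Set X :=
  Metric.ball (B.center i) (B.radius i)

theorem finite_setOf_dist_add_radius_le (x : X) (t : ℝ) :
    {i | dist x (B.center i) + B.radius i ≤ t}.Finite :=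
  (B.boundedlyFinite_center x t).subset fun i hi => by
    have := B.radius_pos i
    rw [mem_ofPred_eq] at hi ⊢
    linarith

/-- The balls of the family inside `B(x, t)`. This is tested on centers and radii, which is stronger
than inclusion of sets. -/
noncomputable def inside (x : X) (t : ℝ) : Finset ι :=
  (B.finite_setOf_dist_add_radius_le x t).toFinset

theorem mem_inside {x : X} {t : ℝ} {i : ι} :
    i ∈ B.inside x t ↔ dist x (B.center i) + B.radius i ≤ t :=
  Set.Finite.mem_toFinset _

theorem ball_subset_closedBall_of_mem_inside {x : X} {t : ℝ} {i : ι} (hi : i ∈ B.inside x t) :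
    B.ball i ⊆ closedBall x t :=
  ball_subset_closedBall.trans <| closedBall_subset_closedBall' <| by
    linarith [B.mem_inside.1 hi, dist_comm x (B.center i)]

/-- The balls of the family crossed by the sphere of radius `s` about `x`; again a condition on
centers and radii. Since the radii are less than `h`, restricting to the balls inside
`B(x, s + 2 * h)` excludes none of them; it only provides finiteness. -/
noncomputable def crossing (x : X) (s : ℝ) : Finset ι :=
  {i ∈ B.inside x (s + 2 * h) |
    s ∈ Ioo (dist x (B.center i) - B.radius i) (dist x (B.center i) + B.radius i)}

theorem mem_crossing {x : X} {s : ℝ} {i : ι} : i ∈ B.crossing x s ↔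
    s ∈ Ioo (dist x (B.center i) - B.radius i) (dist x (B.center i) + B.radius i) := by
  refine Finset.mem_filter.trans (and_iff_right_of_imp fun hi => B.mem_inside.2 ?_)
  linarith [hi.1, B.radius_lt i]

open Classical in
/-- The subfamily `T` has `k`-dimensional cost `∑ R ^ k` less than `h ^ k` inside each of the balls
of radius `t` about the points of the family `p`. -/
def IsThin (p : ν → X) (T : Set ι) (k : ℕ) (t : ℝ) : Prop :=
  ∀ x, ∑ i ∈ B.inside (p x) t with i ∈ T, B.radius i ^ k < h ^ k

theorem exists_isThin_cover {p : ν → X} {r : ℝ} (hp : ∀ y, ∃ x, dist y (p x) ≤ r)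
    {J : ν → Finset ι} (hJcov : ∀ x, closedBall (p x) r ⊆ ⋃ i ∈ J x, B.ball i) {k : ℕ}
    (hJ : ∀ x, ∑ i ∈ J x, B.radius i ^ k < h ^ k) :
    ∃ T : Set ι, ⋃ i ∈ T, B.ball i = univ ∧ B.IsThin p T k r := by
  let covers : Set (ι → Prop) := {f | ∀ y, ∃ i, f i ∧ y ∈ B.ball i}
  have hfin : ∀ y, {i | y ∈ B.ball i}.Finite := fun y =>
    (B.boundedlyFinite_center y h).subset fun i hi => ((mem_ball.1 hi).trans (B.radius_lt i)).le
  have hclosed : ∀ f, (∀ D : Finset ι, ∃ g ∈ covers, ∀ i ∈ D, g i = f i) → f ∈ covers := by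
    intro f hf y
    obtain ⟨g, hg, hgf⟩ := hf (hfin y).toFinset
    obtain ⟨i, hgi, hi⟩ := hg y
    exact ⟨i, hgf i ((hfin y).mem_toFinset.2 hi) ▸ hgi, hi⟩
  have hne : covers.Nonempty := by
    refine ⟨fun _ => True, fun y => ?_⟩
    obtain ⟨x, hx⟩ := hp y
    obtain ⟨i, _, hi⟩ := mem_iUnion₂.1 (hJcov x hx)
    exact ⟨i, trivial, hi⟩
  have exchange : ∀ x, ∀ f ∈ covers, ∃ g ∈ covers, ∀ i, g i → i ∈ J x ∨
      i ∉ B.inside (p x) r ∧ f i := by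
    intro x f hf
    refine ⟨fun i => i ∈ J x ∨ i ∉ B.inside (p x) r ∧ f i, fun y => ?_, fun i => id⟩
    by_cases hy : y ∈ closedBall (p x) r
    · obtain ⟨i, hiJ, hi⟩ := mem_iUnion₂.1 (hJcov x hy)
      exact ⟨i, .inl hiJ, hi⟩
    · obtain ⟨i, hfi, hi⟩ := hf y
      have hins : i ∉ B.inside (p x) r := fun hins =>
        hy (B.ball_subset_closedBall_of_mem_inside hins hi)
      exact ⟨i, .inr ⟨hins, hfi⟩, hi⟩
  obtain ⟨f, hf, hle⟩ := exists_mem_forall_sum_filter_le (fun _ => toFinite univ)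
    (fun _ _ _ => mem_univ _) hclosed hne (fun _ => id)
    (fun i => pow_nonneg (B.radius_pos i).le k) (fun x => B.inside (p x) r) J exchange
  refine ⟨{i | f i}, eq_univ_of_forall fun y => ?_, fun x => (hle x).trans_lt (hJ x)⟩
  obtain ⟨i, hfi, hi⟩ := hf y
  exact mem_biUnion (x := i) hfi hi

/-- A partial labeling of the balls by points of the family `p`, with `none` for unlabeled balls.
Connected components of a union of balls would be a labeling; but unlike connectedness, being a
labeling is a condition on pairs of balls, so it is preserved under pointwise limits. -/
structure IsLabeling (p : ν → X) (t : ℝ) (f : ι → Option ν) : Prop where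
  mem_inside : ∀ {i x}, f i = some x → i ∈ B.inside (p x) t
  eq_of_mem_ball : ∀ {i j x x' y}, f i = some x → f j = some x' →
    y ∈ B.ball i → y ∈ B.ball j → x = x'

/-- The labeling obtained from `f` by labeling all balls inside `B(p x, s)` by `x` and removing the
labels from the balls crossed by the sphere of radius `s` about `p x`. -/
noncomputable def labelInside (p : ν → X) (f : ι → Option ν) (x : ν) (s : ℝ) (i : ι) : Option ν :=
  open Classical in
  if i ∈ B.inside (p x) s then some x else if i ∈ B.crossing (p x) s then none else f i

theorem isLabeling_none (p : ν → X) (t : ℝ) : B.IsLabeling p t fun _ => none :=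
  ⟨nofun, nofun⟩

theorem mem_inside_or_mem_crossing_of_mem_ball {x y : X} {s : ℝ} {i j : ι}
    (hi : i ∈ B.inside x s) (hyi : y ∈ B.ball i) (hyj : y ∈ B.ball j) :
    j ∈ B.inside x s ∨ j ∈ B.crossing x s := by
  have hxy : dist x y ≤ s := mem_closedBall'.1 (B.ball_subset_closedBall_of_mem_inside hi hyi)
  have hyj' : dist y (B.center j) < B.radius j := hyj
  have hxj : dist x (B.center j) - B.radius j < s := by
    linarith [dist_triangle x y (B.center j)]
  rw [mem_inside, mem_crossing]
  exact (le_or_gt _ s).imp_right fun hs => ⟨hxj, hs⟩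

variable {B} {p : ν → X} {t : ℝ} {f : ι → Option ν}

theorem IsLabeling.labelInside (hf : B.IsLabeling p t f) (x : ν) {s : ℝ} (hst : s ≤ t) :
    B.IsLabeling p t (B.labelInside p f x s) where
  mem_inside := by
    intro i x' hi
    unfold SmallBalls.labelInside at hi
    split_ifs at hi with hins
    · obtain rfl := Option.some_inj.1 hi
      exact B.mem_inside.2 ((B.mem_inside.1 hins).trans hst)
    · exact hf.mem_inside hi
  eq_of_mem_ball := by
    intro i j x₁ x₂ y hi hj hyi hyj
    unfold SmallBalls.labelInside at hi hj
    have hij (hins : i ∈ B.inside (p x) s) :=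
      B.mem_inside_or_mem_crossing_of_mem_ball hins hyi hyj
    have hji (hins : j ∈ B.inside (p x) s) :=
      B.mem_inside_or_mem_crossing_of_mem_ball hins hyj hyi
    have hfij (hi : f i = some x₁) (hj : f j = some x₂) := hf.eq_of_mem_ball hi hj hyi hyj
    grind

theorem labelInside_eq_none {x : ν} {s : ℝ} {i : ι} (hi : B.labelInside p f x s i = none) :
    i ∈ B.crossing (p x) s ∨ i ∉ B.inside (p x) s ∧ f i = none := by
  unfold labelInside at hi
  grind

theorem isLabeling_of_forall_finset_exists_eq
    (hf : ∀ D : Finset ι, ∃ g, B.IsLabeling p t g ∧ ∀ i ∈ D, g i = f i) :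
    B.IsLabeling p t f where
  mem_inside := by
    intro i x hi
    obtain ⟨g, hg, hgf⟩ := hf {i}
    exact hg.mem_inside (hgf i (Finset.mem_singleton_self i) ▸ hi)
  eq_of_mem_ball := by
    classical
    intro i j x x' y hi hj
    obtain ⟨g, hg, hgf⟩ := hf {i, j}
    exact hg.eq_of_mem_ball ((hgf i (by simp)).trans hi) ((hgf j (by simp)).trans hj)

open Classical in
theorem IsThin.exists_sum_crossing_lt {T : Set ι} {k : ℕ} {a : ℝ} (hh : 0 < h)
    (hT : B.IsThin p T (k + 1) (a + 4 * h)) (x : ν) :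
    ∃ s ∈ Icc a (a + 2 * h), ∑ i ∈ B.crossing (p x) s with i ∈ T, B.radius i ^ k < h ^ k := by
  obtain ⟨s, hs, hle⟩ := exists_mem_Icc_sum_filter_mem_Ioo_le
    {i ∈ B.inside (p x) (a + 4 * h) | i ∈ T}
    (l := fun i => dist (p x) (B.center i) - B.radius i)
    (u := fun i => dist (p x) (B.center i) + B.radius i) (w := fun i => B.radius i ^ k)
    (fun i _ => by linarith [B.radius_pos i]) (fun i _ => pow_nonneg (B.radius_pos i).le k)
    (show a < a + 2 * h by linarith)
  refine ⟨s, hs, ?_⟩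
  have hsub : {i ∈ B.crossing (p x) s | i ∈ T} ⊆
      {i ∈ {i ∈ B.inside (p x) (a + 4 * h) | i ∈ T} |
        s ∈ Ioo (dist (p x) (B.center i) - B.radius i) (dist (p x) (B.center i) + B.radius i)} := by
    intro i hi
    obtain ⟨hcross, hiT⟩ := Finset.mem_filter.1 hi
    have hins := B.mem_inside.1 (Finset.mem_filter.1 hcross).1
    exact Finset.mem_filter.2 ⟨Finset.mem_filter.2 ⟨B.mem_inside.2 (by linarith [hs.2]), hiT⟩,
      B.mem_crossing.1 hcross⟩
  refine (Finset.sum_le_sum_of_subset_of_nonneg hsub fun i _ _ =>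
    pow_nonneg (B.radius_pos i).le k).trans_lt (lt_of_mul_lt_mul_left ?_ (mul_pos two_pos hh).le)
  calc 2 * h * _ = (a + 2 * h - a) * _ := by ring
    _ ≤ _ := hle
    _ = 2 * ∑ i ∈ B.inside (p x) (a + 4 * h) with i ∈ T, B.radius i ^ (k + 1) := by
        rw [Finset.mul_sum]
        exact Finset.sum_congr rfl fun i _ => by ring
    _ < 2 * h ^ (k + 1) := mul_lt_mul_of_pos_left (hT x) two_pos
    _ = 2 * h * h ^ k := by ring

theorem finite_setOf_mem_inside (hp : BoundedlyFinite p) (i : ι) (t : ℝ) :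
    {x | i ∈ B.inside (p x) t}.Finite :=
  (hp (B.center i) t).subset fun x hx => by
    have := B.mem_inside.1 hx
    rw [mem_ofPred_eq, dist_comm]
    linarith [B.radius_pos i]

theorem IsThin.exists_isLabeling_isThin {T : Set ι} {k : ℕ} {a : ℝ}
    (hT : B.IsThin p T (k + 1) (a + 4 * h)) (hh : 0 < h) (hp : BoundedlyFinite p)
    (hat : a + 2 * h ≤ t) :
    ∃ f, B.IsLabeling p t f ∧ B.IsThin p {i | i ∈ T ∧ f i = none} k a := by
  classical
  choose s hs hcross using hT.exists_sum_crossing_lt hh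
  have hfin : ∀ i, (insert none (some '' {x | i ∈ B.inside (p x) t})).Finite := fun i =>
    ((finite_setOf_mem_inside hp i t).image some).insert none
  have hmem : ∀ f ∈ {f | B.IsLabeling p t f}, ∀ i,
      f i ∈ insert none (some '' {x | i ∈ B.inside (p x) t}) := by
    intro f hf i
    cases hfi : f i with
    | none => exact mem_insert _ _
    | some x => exact mem_insert_of_mem _ (mem_image_of_mem _ (hf.mem_inside hfi))
  have exchange : ∀ x, ∀ f ∈ {f | B.IsLabeling p t f}, ∃ g ∈ {f | B.IsLabeling p t f},
      ∀ i, i ∈ T ∧ g i = none → i ∈ {i ∈ B.crossing (p x) (s x) | i ∈ T} ∨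
        i ∉ B.inside (p x) (s x) ∧ i ∈ T ∧ f i = none := by
    intro x f hf
    refine ⟨B.labelInside p f x (s x), hf.labelInside x ((hs x).2.trans hat), fun i hi => ?_⟩
    have := labelInside_eq_none hi.2
    grind
  obtain ⟨f, hf, hle⟩ := exists_mem_forall_sum_filter_le hfin hmem
    (fun f => isLabeling_of_forall_finset_exists_eq) ⟨_, B.isLabeling_none p t⟩
    (fun i l => i ∈ T ∧ l = none) (fun i => pow_nonneg (B.radius_pos i).le k)
    (fun x => B.inside (p x) (s x)) _ exchange
  refine ⟨f, hf, fun x => ?_⟩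
  refine (Finset.sum_le_sum_of_subset_of_nonneg (fun i hi => ?_) fun i _ _ =>
    pow_nonneg (B.radius_pos i).le k).trans_lt ((hle x).trans_lt (hcross x))
  simp only [Finset.mem_filter, mem_inside, mem_ofPred_eq] at hi ⊢
  exact ⟨hi.1.trans (hs x).1, hi.2⟩

theorem IsThin.eq_empty {T : Set ι} {ρ : ℝ} (hT : B.IsThin p T 0 ρ)
    (hp : ∀ y, ∃ x, dist y (p x) ≤ h) (hρ : 2 * h ≤ ρ) : T = ∅ := by
  classical
  refine eq_empty_of_forall_notMem fun i hi => ?_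
  obtain ⟨x, hx⟩ := hp (B.center i)
  have hins : i ∈ B.inside (p x) ρ :=
    B.mem_inside.2 (by linarith [dist_comm (p x) (B.center i), B.radius_lt i])
  have hcard : {i ∈ B.inside (p x) ρ | i ∈ T}.card = 0 := by
    simpa only [pow_zero, Finset.sum_const, nsmul_one, Nat.cast_lt_one] using hT x
  have hmem : i ∈ {i ∈ B.inside (p x) ρ | i ∈ T} := Finset.mem_filter.2 ⟨hins, hi⟩
  simp [Finset.card_eq_zero.1 hcard] at hmem

theorem IsThin.exists_labelings (hh : 0 < h) (hp : BoundedlyFinite p)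
    (hnet : ∀ y, ∃ x, dist y (p x) ≤ h) {ρ : ℝ} (hρ : 2 * h ≤ ρ) {k : ℕ} {T : Set ι}
    (hT : B.IsThin p T k (ρ + 4 * k * h)) (ht : ρ + 4 * k * h ≤ t + 2 * h) :
    ∃ f : Fin k → ι → Option ν, (∀ m, B.IsLabeling p t (f m)) ∧
      ∀ i ∈ T, ∃ m x, f m i = some x := by
  induction k generalizing T with
  | zero =>
    have hT' : T = ∅ := IsThin.eq_empty (by simpa using hT) hnet hρ
    exact ⟨nofun, nofun, by simp [hT']⟩
  | succ k ih =>
    have hstep : ρ + 4 * (k + 1 : ℕ) * h = ρ + 4 * k * h + 4 * h := by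
      push_cast
      ring
    rw [hstep] at hT ht
    obtain ⟨f, hf, hthin⟩ := hT.exists_isLabeling_isThin hh hp (t := t) (by linarith)
    obtain ⟨g, hg, hgT⟩ := ih hthin (by linarith)
    refine ⟨Fin.cons f g, Fin.cons hf hg, fun i hi => ?_⟩
    cases hfi : f i with
    | none =>
      obtain ⟨m, x, hmx⟩ := hgT i ⟨hi, hfi⟩
      exact ⟨m.succ, x, hmx⟩
    | some x => exact ⟨0, x, hfi⟩

theorem exists_open_cover_of_labelings {n : ℕ} {T : Set ι} (hT : ⋃ i ∈ T, B.ball i = univ)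
    {f : Fin n → ι → Option ν} (hf : ∀ m, B.IsLabeling p t (f m))
    (hfT : ∀ i ∈ T, ∃ m x, f m i = some x) :
    ∃ U : Fin n × ν → Set X, (∀ q, IsOpen (U q)) ∧ (∀ y, ∃ q, y ∈ U q) ∧
      (∀ q, U q ⊆ closedBall (p q.2) t) ∧ ∀ y, {q | y ∈ U q}.encard ≤ n := by
  refine ⟨fun q => ⋃ (i) (_ : f q.1 i = some q.2), B.ball i, fun q => ?_, fun y => ?_,
    fun q => ?_, fun y => ?_⟩
  · exact isOpen_iUnion fun i => isOpen_iUnion fun _ => isOpen_ball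
  · obtain ⟨i, hi, hyi⟩ := mem_iUnion₂.1 (hT.symm ▸ mem_univ y : y ∈ ⋃ i ∈ T, B.ball i)
    obtain ⟨m, x, hmx⟩ := hfT i hi
    exact ⟨(m, x), mem_iUnion₂.2 ⟨i, hmx, hyi⟩⟩
  · exact iUnion₂_subset fun i hi =>
      B.ball_subset_closedBall_of_mem_inside ((hf q.1).mem_inside hi)
  · have hinj : InjOn Prod.fst {q : Fin n × ν | y ∈ ⋃ (i) (_ : f q.1 i = some q.2), B.ball i} := by
      rintro ⟨m, x⟩ hq ⟨m', x'⟩ hq' rfl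
      obtain ⟨i, hi, hyi⟩ := mem_iUnion₂.1 hq
      obtain ⟨j, hj, hyj⟩ := mem_iUnion₂.1 hq'
      exact Prod.ext rfl ((hf m).eq_of_mem_ball hi hj hyi hyj)
    rw [← hinj.encard_image]
    exact (encard_le_encard (subset_univ _)).trans_eq (by simp)

end SmallBalls

theorem exists_smallBalls_cover {X ν : Type*} [MetricSpace X] [ProperSpace X] {p : ν → X}
    (hp : BoundedlyFinite p) {n : ℕ} {h r : ℝ} (hh : 0 ≤ h)
    (hball : ∀ x, HC (n : ℝ) (closedBall (p x) r) < ENNReal.ofReal (h ^ n)) :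
    ∃ (ι : Set (X × ℝ≥0)) (B : SmallBalls X ι h) (J : ν → Finset ι),
      (∀ x, closedBall (p x) r ⊆ ⋃ i ∈ J x, B.ball i) ∧
      ∀ x, ∑ i ∈ J x, B.radius i ^ n < h ^ n := by
  classical
  choose G hG hGcov hGsum using fun x =>
    exists_finset_ball_cover_of_HC_lt (isCompact_closedBall (p x) r) (hball x)
  have hsum : ∀ x, ∑ q ∈ G x, (q.2 : ℝ) ^ n < h ^ n := fun x =>
    sum_pow_lt_of_sum_rpow_lt_ofReal (hGsum x)
  have hlt : ∀ x, ∀ q ∈ G x, (q.2 : ℝ) < h := fun x q hq =>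
    lt_of_pow_lt_pow_left₀ n hh <| (Finset.single_le_sum (f := fun q : X × ℝ≥0 => (q.2 : ℝ) ^ n)
      (fun _ _ => by positivity) hq).trans_lt (hsum x)
  have hdist : ∀ x, ∀ q ∈ G x, dist q.1 (p x) ≤ h + r := by
    intro x q hq
    obtain ⟨-, z, hzq, hzx⟩ := hG x q hq
    exact (dist_triangle_left _ _ z).trans
      (add_le_add ((mem_ball.1 hzq).trans (hlt x q hq)).le (mem_closedBall.1 hzx))
  have hex (i : ⋃ x, (G x : Set (X × ℝ≥0))) : ∃ x, ↑i ∈ G x := mem_iUnion.1 i.2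
  let B : SmallBalls X (⋃ x, (G x : Set (X × ℝ≥0))) h :=
    { center i := i.1.1
      radius i := i.1.2
      radius_pos i := (hex i).elim fun x hx => (hG x i hx).1
      radius_lt i := (hex i).elim fun x hx => hlt x i hx
      boundedlyFinite_center := hp.iUnion_of_dist_le hdist }
  have hGι : ∀ x, ∀ q ∈ G x, q ∈ ⋃ x, (G x : Set (X × ℝ≥0)) := fun x q hq => mem_iUnion.2 ⟨x, hq⟩
  refine ⟨_, B, fun x => (G x).subtype _, fun x y hy => ?_, fun x => ?_⟩
  · obtain ⟨q, hq, hyq⟩ := mem_iUnion₂.1 (hGcov x hy)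
    exact mem_iUnion₂.2 ⟨⟨q, hGι x q hq⟩, Finset.mem_subtype.2 hq, hyq⟩
  · exact (Finset.sum_subtype_of_mem (fun q : X × ℝ≥0 => (q.2 : ℝ) ^ n) (hGι x)).trans_lt (hsum x)

theorem stmt2_general {X : Type*} [MetricSpace X] [ProperSpace X] (n : ℕ) {h r : ℝ} (hh : 0 < h)
    (hhr : (4 * n + 2) * h ≤ r)
    (hball : ∀ x : X, HC (n : ℝ) (closedBall x r) < ENNReal.ofReal (h ^ n)) :
    ∃ (ι : Type) (U : ι → Set X), (∀ i, IsOpen (U i)) ∧ (∀ x, ∃ i, x ∈ U i) ∧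
      (∀ i, ∃ c, U i ⊆ closedBall c (r - 2 * h)) ∧ ∀ x, {i | x ∈ U i}.encard ≤ n := by
  obtain ⟨ν, p, hp, hnet⟩ := exists_boundedlyFinite_net X hh
  obtain ⟨ι, B, J, hJcov, hJ⟩ := exists_smallBalls_cover hp hh.le fun x => hball (p x)
  have hρ : 2 * h ≤ r - 4 * n * h := by linarith
  have hhr' : h ≤ r := by nlinarith [n.cast_nonneg (α := ℝ)]
  obtain ⟨T, hTcov, hT⟩ := B.exists_isThin_cover
    (fun y => (hnet y).imp fun _ hx => hx.trans hhr') hJcov hJ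
  obtain ⟨f, hf, hfT⟩ := SmallBalls.IsThin.exists_labelings (t := r - 2 * h) hh hp hnet hρ
    (by rwa [sub_add_cancel]) (by linarith)
  obtain ⟨U, hopen, hcov, hsub, hmult⟩ := SmallBalls.exists_open_cover_of_labelings hTcov hf hfT
  exact ⟨Fin n × ν, U, hopen, hcov, fun q => ⟨p q.2, hsub q⟩, hmult⟩

/-- If `X` is boundedly compact (all closed balls are compact), `n ≥ 1`, `r > 0`, `μ > 0`,
and every closed ball of radius `r` has `n`-dimensional Hausdorff content at most
`(r/(8n))^n − μ`, then `UR_{n-1}(X) < r`: there are `r' < r` and an open covering of `X`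
by sets contained in closed balls of radius `r'` with multiplicity at most `n`. -/
theorem stmt2 {X : Type*} [MetricSpace X]
    (hbc : ∀ (x : X) (t : ℝ), IsCompact (Metric.closedBall x t))
    (n : ℕ) (hn : 1 ≤ n) (r : ℝ) (hr : 0 < r) (μ : ℝ) (hμ : 0 < μ)
    (hball : ∀ x : X, HC (n : ℝ) (Metric.closedBall x r) ≤
      ENNReal.ofReal ((r / (8 * n)) ^ n - μ)) :
    ∃ r' : ℝ, r' < r ∧ ∃ (ι : Type) (U : ι → Set X),
      (∀ i, IsOpen (U i)) ∧ (∀ x : X, ∃ i, x ∈ U i) ∧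
      (∀ i, ∃ c : X, U i ⊆ Metric.closedBall c r') ∧
      (∀ x : X, {i | x ∈ U i}.encard ≤ n) := by
  have : ProperSpace X := ⟨hbc⟩
  have hn' : (1 : ℝ) ≤ n := mod_cast hn
  have hh : 0 < r / (8 * n) := by positivity
  have hhr : (4 * n + 2) * (r / (8 * n)) ≤ r := by
    rw [mul_div_assoc', div_le_iff₀ (by positivity)]
    nlinarith
  refine ⟨r - 2 * (r / (8 * n)), by linarith, stmt2_general n hh hhr fun x => (hball x).trans_lt ?_⟩
  exact (ENNReal.ofReal_lt_ofReal_iff (pow_pos hh n)).2 (sub_lt_self _ hμ)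
end

section
/- Let r > 0, let n ≥ 1 be an integer, let X be a metric space, and let Y be a compact subset of X such that for every closed metric ball B of radius r in X one has HC_n(B ∩ Y) < (r/(4n))^n. Then UR_{n−1}(Y) < r; that is, there exist r' < r and a finite covering of Y by sets that are open in Y, each contained in a closed metric ball of X of radius r', such that no n+1 of the covering sets have a common point. -/
/-!
Write `r = 4 n q`, so that every ball of radius `4 n q` about a point of `Y` meets `Y` in a set of
`n`-dimensional content less than `q ^ n`. With `q` fixed, argue by induction on `n`; for `n = 0`
the content counts balls, so `Y` is empty.

For the step from `n` to `n + 1`, call a compact `Z ⊆ Y` a separator if `Y \ Z` is covered by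
finitely many disjoint open sets, each in a ball of radius less than `4 (n + 1) q`; for instance
`Z = Y`. Among all covers of separators by finitely many balls of radius at most `q`, choose a
cover `F` of a separator `Z` whose weight `∑ ρ ^ n` is minimal up to a small error. Given `x ∈ Z`,
the coarea inequality yields some `t` in the interval `(4 n q + 2 q, 4 (n + 1) q)`, of length
`2 q`, such that the part of `Y` on the sphere of radius `t` about `x` has a cover of weight less
than `q ^ n`. Replacing the part of `Z` inside this sphere by the part of `Y` on it gives another
separator, so by near-minimality the balls of `F` inside the sphere have weight less than `q ^ n`.
They cover the part of `Z` in the ball of radius `4 n q` about `x`, because their diameter is at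
most `2 q`. Hence the induction hypothesis applies to `Z`, and its cover together with the
disjoint open pieces has multiplicity at most `n + 1`.
-/

open Metric Set
open scoped ENNReal NNReal

open Filter Topology MeasureTheory

/-! ### Finite families of balls and their content -/

section Families

variable {X : Type*} {F : Finset (X × ℝ≥0)} {𝒰 𝒱 : Set (Set X)} {n : ℕ} {q : ℝ≥0}

/-- The `n`-dimensional weight `∑ ρ ^ n` of a finite family of balls given by centres and radii. -/
def ballWeight (n : ℕ) (F : Finset (X × ℝ≥0)) : ℝ≥0 :=
  ∑ p ∈ F, p.2 ^ n

lemma ballWeight_union_le [DecidableEq (X × ℝ≥0)] (n : ℕ) (F G : Finset (X × ℝ≥0)) :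
    ballWeight n (F ∪ G) ≤ ballWeight n F + ballWeight n G := by
  simp only [ballWeight, ← Finset.sum_union_inter (s₁ := F), le_add_iff_nonneg_right, zero_le]

lemma radius_le_of_ballWeight_le (hn : n ≠ 0) (h : ballWeight n F ≤ q ^ n) {p : X × ℝ≥0}
    (hp : p ∈ F) : p.2 ≤ q :=
  (pow_le_pow_iff_left₀ zero_le zero_le hn).1
    ((Finset.single_le_sum (f := fun p : X × ℝ≥0 => p.2 ^ n) (fun _ _ => zero_le) hp).trans h)

/-- Every point lies in at most `n` members of the family `𝒰`. -/
def MultiplicityLE (n : ℕ) (𝒰 : Set (Set X)) : Prop :=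
  ∀ y, {U ∈ 𝒰 | y ∈ U}.encard ≤ n

lemma MultiplicityLE.union {m : ℕ} (h𝒰 : MultiplicityLE m 𝒰) (h𝒱 : MultiplicityLE n 𝒱) :
    MultiplicityLE (m + n) (𝒰 ∪ 𝒱) := fun y =>
  calc {U ∈ 𝒰 ∪ 𝒱 | y ∈ U}.encard = ({U ∈ 𝒰 | y ∈ U} ∪ {U ∈ 𝒱 | y ∈ U}).encard :=
        congrArg encard sep_union
    _ ≤ {U ∈ 𝒰 | y ∈ U}.encard + {U ∈ 𝒱 | y ∈ U}.encard := encard_union_le _ _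
    _ ≤ (m + n : ℕ) := by
        push_cast
        exact add_le_add (h𝒰 y) (h𝒱 y)

lemma multiplicityLE_one_of_pairwiseDisjoint (h : 𝒱.PairwiseDisjoint id) :
    MultiplicityLE 1 𝒱 := fun y =>
  encard_le_one_iff.2 fun _ _ hV hW => h.elim_set hV.1 hW.1 y hV.2 hW.2

end Families

section PseudoMetricSpace

variable {X : Type*} [PseudoMetricSpace X] {Y Z A B U : Set X} {F G : Finset (X × ℝ≥0)}
  {𝒰 𝒱 : Set (Set X)} {n : ℕ} {q : ℝ≥0} {r s t R : ℝ}

/-- The union of a finite family of open balls, each given by its centre and radius. Unlike the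
closed balls in `HC`, open balls allow passing to finite subcovers. -/
def ballUnion (F : Finset (X × ℝ≥0)) : Set X :=
  ⋃ p ∈ F, ball p.1 p.2

/-- The content of `A` with respect to finite covers by open balls: the infimum of their
`n`-dimensional weights. -/
noncomputable def finContent (n : ℕ) (A : Set X) : ℝ≥0∞ :=
  ⨅ (F : Finset (X × ℝ≥0)) (_ : A ⊆ ballUnion F), (ballWeight n F : ℝ≥0∞)

lemma mem_ballUnion {y : X} : y ∈ ballUnion F ↔ ∃ p ∈ F, dist y p.1 < p.2 := by
  simp only [ballUnion, mem_iUnion₂, mem_ball, exists_prop]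

lemma isOpen_ballUnion (F : Finset (X × ℝ≥0)) : IsOpen (ballUnion F) :=
  isOpen_biUnion fun _ _ => isOpen_ball

lemma finContent_le (h : A ⊆ ballUnion F) : finContent n A ≤ ballWeight n F :=
  iInf₂_le F h

lemma finContent_lt_iff {c : ℝ≥0∞} :
    finContent n A < c ↔ ∃ F : Finset (X × ℝ≥0), A ⊆ ballUnion F ∧ ballWeight n F < c := by
  simp only [finContent, iInf_lt_iff, exists_prop]

lemma finContent_le_sum {ι : Type*} (T : Finset ι) (x : ι → X) (ρ : ι → ℝ≥0)
    (hA : A ⊆ ⋃ i ∈ T, ball (x i) (ρ i)) : finContent n A ≤ ∑ i ∈ T, (ρ i : ℝ≥0∞) ^ n := by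
  classical
  calc finContent n A ≤ ballWeight n (T.image fun i => (x i, ρ i)) :=
        finContent_le <| by simpa only [ballUnion, Finset.set_biUnion_finset_image] using hA
    _ ≤ (∑ i ∈ T, ρ i ^ n : ℝ≥0) :=
        ENNReal.coe_le_coe.2 (Finset.sum_image_le_of_nonneg fun _ _ => zero_le)
    _ = ∑ i ∈ T, (ρ i : ℝ≥0∞) ^ n := by push_cast; rfl

lemma eq_empty_of_finContent_zero_lt_one (h : finContent 0 A < 1) : A = ∅ := by
  obtain ⟨F, hAF, hF⟩ := finContent_lt_iff.1 h
  have hF0 : F = ∅ := by simpa [ballWeight] using hF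
  simpa [ballUnion, hF0] using hAF

/-! ### Semicontinuity in the centre -/

lemma eventually_closedBall_inter_subset (hY : IsCompact Y) (hU : IsOpen U) {x : X}
    (h : closedBall x r ∩ Y ⊆ U) : ∀ᶠ x' in 𝓝 x, closedBall x' r ∩ Y ⊆ U := by
  have hfar : ∀ᶠ x' in 𝓝 x, ∀ y ∈ Y \ U, r < dist y x' := by
    refine (hY.diff hU).eventually_forall_of_forall_eventually fun y hy => ?_
    have hyx : r < dist y x := not_le.1 fun hle => hy.2 (h ⟨hle, hy.1⟩)
    have hdist : Continuous fun z : X × X => dist z.2 z.1 := by fun_prop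
    exact hdist.continuousAt.eventually_const_lt hyx
  filter_upwards [hfar] with x' hx' y hy
  exact by_contra fun hyU => (hx' y ⟨hy.2, hyU⟩).not_ge hy.1

lemma upperSemicontinuous_finContent_closedBall_inter (hY : IsCompact Y) (n : ℕ) (r : ℝ) :
    UpperSemicontinuous fun x => finContent n (closedBall x r ∩ Y) := by
  intro x c hc
  obtain ⟨F, hF, hFc⟩ := finContent_lt_iff.1 hc
  filter_upwards [eventually_closedBall_inter_subset hY (isOpen_ballUnion F) hF] with x' hx'
  exact (finContent_le hx').trans_lt hFc

lemma exists_forall_finContent_lt (hY : IsCompact Y) {c : ℝ≥0} (hc : 0 < c)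
    (h : ∀ x ∈ Y, finContent n (closedBall x r ∩ Y) < c) :
    ∃ c' < c, ∀ x ∈ Y, finContent n (closedBall x r ∩ Y) < c' := by
  obtain rfl | hne := Y.eq_empty_or_nonempty
  · exact ⟨0, hc, fun x hx => hx.elim⟩
  have husc := (upperSemicontinuous_finContent_closedBall_inter hY n r).upperSemicontinuousOn Y
  obtain ⟨x₀, hx₀, hmax⟩ := husc.exists_isMaxOn hne hY
  obtain ⟨c', hlt, hc'⟩ := ENNReal.lt_iff_exists_nnreal_btwn.1 (h x₀ hx₀)
  exact ⟨c', ENNReal.coe_lt_coe.1 hc', fun x hx => (hmax hx).trans_lt hlt⟩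

/-! ### The coarea inequality -/

/-- The balls of `F` that can meet the sphere of radius `t` about `x` by the triangle inequality. -/
noncomputable def meetingSphere (x : X) (t : ℝ) (F : Finset (X × ℝ≥0)) : Finset (X × ℝ≥0) :=
  {p ∈ F | |t - dist x p.1| < p.2}

lemma sphere_inter_subset_ballUnion (hA : A ⊆ ballUnion F) (x : X) (t : ℝ) :
    sphere x t ∩ A ⊆ ballUnion (meetingSphere x t F) := by
  rintro y ⟨rfl, hyA⟩
  obtain ⟨p, hp, hyp⟩ := mem_ballUnion.1 (hA hyA)
  refine mem_ballUnion.2 ⟨p, Finset.mem_filter.2 ⟨hp, ?_⟩, hyp⟩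
  rw [dist_comm x]
  exact (abs_dist_sub_le y p.1 x).trans_lt hyp

lemma ballWeight_meetingSphere_eq_sum_indicator (n : ℕ) (x : X) (F : Finset (X × ℝ≥0)) (t : ℝ) :
    (ballWeight n (meetingSphere x t F) : ℝ≥0∞) =
      ∑ p ∈ F, (ball (dist x p.1) (p.2 : ℝ)).indicator (fun _ => (p.2 : ℝ≥0∞) ^ n) t := by
  classical
  simp only [ballWeight, meetingSphere, Finset.sum_filter, ENNReal.ofNNReal_finsetSum,
    indicator_apply, mem_ball, Real.dist_eq, apply_ite ENNReal.ofNNReal, ENNReal.coe_pow,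
    ENNReal.coe_zero]

lemma measurable_ballWeight_meetingSphere (n : ℕ) (x : X) (F : Finset (X × ℝ≥0)) :
    Measurable fun t : ℝ => (ballWeight n (meetingSphere x t F) : ℝ≥0∞) := by
  simp only [ballWeight_meetingSphere_eq_sum_indicator]
  exact Finset.measurable_sum _ fun p _ => measurable_const.indicator measurableSet_ball

/-- A ball of radius `ρ` meets spheres about `x` only for radii in an interval of length `2 ρ`. -/
lemma lintegral_ballWeight_meetingSphere (n : ℕ) (x : X) (F : Finset (X × ℝ≥0)) :
    ∫⁻ t : ℝ, (ballWeight n (meetingSphere x t F) : ℝ≥0∞) =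
      2 * ballWeight (n + 1) F := by
  simp only [ballWeight_meetingSphere_eq_sum_indicator]
  rw [lintegral_finsetSum _ fun p _ => measurable_const.indicator measurableSet_ball, ballWeight,
    ENNReal.ofNNReal_finsetSum, Finset.mul_sum]
  refine Finset.sum_congr rfl fun p _ => ?_
  rw [lintegral_indicator_const measurableSet_ball, Real.volume_ball,
    ENNReal.ofReal_mul zero_le_two, ENNReal.ofReal_coe_nnreal, ENNReal.ofReal_ofNat]
  push_cast
  ring

lemma exists_mul_ballWeight_meetingSphere_le (n : ℕ) (x : X) (F : Finset (X × ℝ≥0)) (a : ℝ)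
    {ℓ : ℝ≥0} (hℓ : 0 < ℓ) :
    ∃ t ∈ Ioo a (a + ℓ),
      ℓ * ballWeight n (meetingSphere x t F) ≤ 2 * ballWeight (n + 1) F := by
  have hvol : volume (Ioo a (a + ℓ)) = ℓ := by simp
  obtain ⟨t, ht, hle⟩ := exists_le_setLAverage (μ := volume) (s := Ioo a (a + ℓ))
    (by simp [hvol, hℓ.ne']) (by simp [hvol])
    (measurable_ballWeight_meetingSphere n x F).aemeasurable
  refine ⟨t, ht, ?_⟩
  rw [setLAverage_eq, hvol, ENNReal.le_div_iff_mul_le (by simp [hℓ.ne']) (by simp), mul_comm] at hle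
  exact_mod_cast hle.trans
    ((setLIntegral_le_lintegral _ _).trans_eq (lintegral_ballWeight_meetingSphere n x F))

/-! ### Covers by balls of bounded radius -/

/-- The family `F` of open balls covers `A`, and its radii are at most `q`. -/
structure IsFineCover (q : ℝ≥0) (A : Set X) (F : Finset (X × ℝ≥0)) : Prop where
  subset_ballUnion : A ⊆ ballUnion F
  radius_le : ∀ p ∈ F, p.2 ≤ q

lemma exists_isFineCover (hY : IsCompact Y) (hq : 0 < q) : ∃ F, IsFineCover q Y F := by
  classical
  obtain ⟨T, -, hT⟩ := hY.elim_nhds_subcover (fun x => ball x q) fun x _ =>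
    ball_mem_nhds x (NNReal.coe_pos.2 hq)
  refine ⟨T.image fun x => (x, q), ?_, ?_⟩
  · simpa only [ballUnion, Finset.set_biUnion_finset_image] using hT
  · exact Finset.forall_mem_image.2 fun _ _ => le_rfl

lemma IsFineCover.union [DecidableEq (X × ℝ≥0)] (hF : IsFineCover q A F)
    (hG : IsFineCover q B G) : IsFineCover q (A ∪ B) (F ∪ G) where
  subset_ballUnion := by
    simpa only [ballUnion, Finset.set_biUnion_union] using
      union_subset_union hF.subset_ballUnion hG.subset_ballUnion
  radius_le := Finset.forall_mem_union.2 ⟨hF.radius_le, hG.radius_le⟩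

lemma IsFineCover.diff_ball (hF : IsFineCover q A F) (x : X) (t : ℝ) :
    IsFineCover q (A \ ball x t) {p ∈ F | t ≤ dist p.1 x + p.2} where
  subset_ballUnion := by
    rintro y ⟨hyA, hyx⟩
    obtain ⟨p, hp, hyp⟩ := mem_ballUnion.1 (hF.subset_ballUnion hyA)
    have hty : t ≤ dist y x := not_lt.1 hyx
    refine mem_ballUnion.2 ⟨p, Finset.mem_filter.2 ⟨hp, ?_⟩, hyp⟩
    linarith [dist_triangle y p.1 x]
  radius_le p hp := hF.radius_le p (Finset.mem_filter.1 hp).1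

lemma IsFineCover.closedBall_inter_subset (hF : IsFineCover q A F) (x : X) (hst : s + 2 * q ≤ t) :
    closedBall x s ∩ A ⊆ ballUnion {p ∈ F | ¬ t ≤ dist p.1 x + p.2} := by
  rintro y ⟨hyx, hyA⟩
  obtain ⟨p, hp, hyp⟩ := mem_ballUnion.1 (hF.subset_ballUnion hyA)
  have hpq : (p.2 : ℝ) ≤ q := hF.radius_le p hp
  refine mem_ballUnion.2 ⟨p, Finset.mem_filter.2 ⟨hp, not_le.2 ?_⟩, hyp⟩
  linarith [dist_triangle_left p.1 x y, mem_closedBall.1 hyx]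

lemma exists_isFineCover_sphere (hq : 0 < q) {c : ℝ≥0} (hc : c ≤ q ^ (n + 1)) {x : X}
    (h : finContent (n + 1) (closedBall x (s + 4 * q) ∩ Y) < c) :
    ∃ t ∈ Ioo (s + 2 * q) (s + 4 * q), ∃ G, IsFineCover q (sphere x t ∩ Y) G ∧
      q * ballWeight n G ≤ c := by
  obtain ⟨F, hF, hFc⟩ := finContent_lt_iff.1 h
  have hFc : ballWeight (n + 1) F ≤ c := (ENNReal.coe_lt_coe.1 hFc).le
  obtain ⟨t, ht, hle⟩ :=
    exists_mul_ballWeight_meetingSphere_le n x F (s + 2 * q) (mul_pos two_pos hq)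
  have hend : s + 2 * q + ↑(2 * q) = s + 4 * q := by push_cast; ring
  rw [hend] at ht
  refine ⟨t, ht, meetingSphere x t F, ⟨?_, ?_⟩, ?_⟩
  · refine Subset.trans ?_ (sphere_inter_subset_ballUnion hF x t)
    exact fun y hy => ⟨hy.1, closedBall_subset_closedBall ht.2.le (sphere_subset_closedBall hy.1),
      hy.2⟩
  · exact fun p hp => radius_le_of_ballWeight_le n.succ_ne_zero (hFc.trans hc)
      (Finset.mem_filter.1 hp).1
  · linarith

/-! ### Small open covers and separators -/

/-- A finite family of open sets covering `A`, each contained in a ball of radius less than `R`. -/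
structure IsSmallOpenCover (R : ℝ) (A : Set X) (𝒰 : Set (Set X)) : Prop where
  finite : 𝒰.Finite
  isOpen : ∀ U ∈ 𝒰, IsOpen U
  radius_lt : ∀ U ∈ 𝒰, ∃ c, ∃ ρ < R, U ⊆ closedBall c ρ
  subset_sUnion : A ⊆ ⋃₀ 𝒰

/-- A compact subset `Z` of `Y` whose complement in `Y` has a cover by finitely many disjoint open
sets, each contained in a ball of radius less than `R`. -/
structure IsSeparator (R : ℝ) (Y Z : Set X) : Prop where
  isCompact : IsCompact Z
  subset : Z ⊆ Y
  exists_pieces : ∃ 𝒱, IsSmallOpenCover R (Y \ Z) 𝒱 ∧ 𝒱.PairwiseDisjoint id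

lemma IsSmallOpenCover.union (h𝒰 : IsSmallOpenCover R A 𝒰) (h𝒱 : IsSmallOpenCover R B 𝒱) :
    IsSmallOpenCover R (A ∪ B) (𝒰 ∪ 𝒱) where
  finite := h𝒰.finite.union h𝒱.finite
  isOpen U hU := hU.elim (h𝒰.isOpen U) (h𝒱.isOpen U)
  radius_lt U hU := hU.elim (h𝒰.radius_lt U) (h𝒱.radius_lt U)
  subset_sUnion := by
    rw [sUnion_union]
    exact union_subset_union h𝒰.subset_sUnion h𝒱.subset_sUnion

lemma IsSmallOpenCover.mono_radius (h : IsSmallOpenCover r A 𝒰) (hrR : r ≤ R) :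
    IsSmallOpenCover R A 𝒰 where
  finite := h.finite
  isOpen := h.isOpen
  radius_lt U hU :=
    let ⟨c, ρ, hρ, hUc⟩ := h.radius_lt U hU
    ⟨c, ρ, hρ.trans_le hrR, hUc⟩
  subset_sUnion := h.subset_sUnion

lemma IsSmallOpenCover.exists_common_radius (h : IsSmallOpenCover R A 𝒰) :
    ∃ r < R, ∀ U ∈ 𝒰, ∃ c, U ⊆ closedBall c r := by
  have hev : ∀ᶠ r in 𝓝[<] R, ∀ U ∈ 𝒰, ∃ c, U ⊆ closedBall c r := by
    refine (eventually_all_finite h.finite).2 fun U hU => ?_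
    obtain ⟨c, ρ, hρ, hUc⟩ := h.radius_lt U hU
    filter_upwards [Ioo_mem_nhdsLT hρ] with r hr
    exact ⟨c, hUc.trans (closedBall_subset_closedBall hr.1.le)⟩
  exact (eventually_mem_nhdsWithin.and hev).exists

lemma IsSmallOpenCover.exists_fin_cover (h : IsSmallOpenCover R Y 𝒰) (hn : MultiplicityLE n 𝒰) :
    ∃ r < R, ∃ (k : ℕ) (U : Fin k → Set X),
      (∀ i, ∃ V : Set X, IsOpen V ∧ U i = V ∩ Y) ∧ (Y ⊆ ⋃ i, U i) ∧
      (∀ i, ∃ c : X, U i ⊆ closedBall c r) ∧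
      (∀ x : X, {i | x ∈ U i}.encard ≤ n) := by
  obtain ⟨r, hr, hrad⟩ := h.exists_common_radius
  obtain ⟨k, f, hinj, rfl⟩ := h.finite.fin_param
  refine ⟨r, hr, k, fun i => f i ∩ Y, fun i => ⟨f i, h.isOpen _ (mem_range_self i), rfl⟩, ?_,
    fun i => ?_, fun x => ?_⟩
  · rw [← iUnion_inter]
    exact subset_inter (sUnion_range f ▸ h.subset_sUnion) subset_rfl
  · obtain ⟨c, hc⟩ := hrad _ (mem_range_self i)
    exact ⟨c, inter_subset_left.trans hc⟩
  · rw [← hinj.encard_image]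
    refine (encard_le_encard ?_).trans (hn x)
    rintro _ ⟨i, hi, rfl⟩
    exact ⟨mem_range_self i, hi.1⟩

lemma IsSmallOpenCover.insert_ball (h : IsSmallOpenCover R A 𝒱) (x : X) (ht : t < R) :
    IsSmallOpenCover R (ball x t ∪ A \ closedBall x t)
      (insert (ball x t) ((· \ closedBall x t) '' 𝒱)) where
  finite := (h.finite.image _).insert _
  isOpen := forall_mem_insert.2 ⟨isOpen_ball, forall_mem_image.2 fun V hV =>
    (h.isOpen V hV).sdiff isClosed_closedBall⟩
  radius_lt := forall_mem_insert.2 ⟨⟨x, t, ht, ball_subset_closedBall⟩,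
    forall_mem_image.2 fun V hV =>
      let ⟨c, ρ, hρ, hVc⟩ := h.radius_lt V hV
      ⟨c, ρ, hρ, sdiff_subset.trans hVc⟩⟩
  subset_sUnion := by
    rw [sUnion_insert]
    refine union_subset_union_right _ ?_
    rintro y ⟨hyA, hyx⟩
    obtain ⟨V, hV, hyV⟩ := h.subset_sUnion hyA
    exact ⟨V \ closedBall x t, mem_image_of_mem _ hV, hyV, hyx⟩

lemma pairwiseDisjoint_insert_ball (h : 𝒱.PairwiseDisjoint id) (x : X) (t : ℝ) :
    (insert (ball x t) ((· \ closedBall x t) '' 𝒱)).PairwiseDisjoint id :=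
  pairwiseDisjoint_insert.2 ⟨h.image_of_le fun _ => sdiff_subset, forall_mem_image.2 fun _ _ _ =>
    disjoint_sdiff_right.mono_left ball_subset_closedBall⟩

lemma IsSeparator.refl (hY : IsCompact Y) (R : ℝ) : IsSeparator R Y Y where
  isCompact := hY
  subset := subset_rfl
  exists_pieces := ⟨∅, ⟨finite_empty, by simp, by simp, by simp⟩, pairwiseDisjoint_empty⟩

lemma IsSeparator.diff_ball_union_sphere (h : IsSeparator R Y Z) (hY : IsCompact Y) (x : X)
    (ht : t < R) : IsSeparator R Y (Z \ ball x t ∪ sphere x t ∩ Y) where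
  isCompact := (h.isCompact.diff isOpen_ball).union (hY.inter_left isClosed_sphere)
  subset := union_subset (sdiff_subset.trans h.subset) inter_subset_right
  exists_pieces := by
    obtain ⟨𝒱, hcover, hdisj⟩ := h.exists_pieces
    have hpieces := hcover.insert_ball x ht
    refine ⟨_, { hpieces with subset_sUnion := Subset.trans ?_ hpieces.subset_sUnion },
      pairwiseDisjoint_insert_ball hdisj x t⟩
    rintro y ⟨hyY, hy⟩
    rcases lt_trichotomy (dist y x) t with hlt | heq | hgt
    · exact Or.inl hlt
    · exact absurd (Or.inr ⟨heq, hyY⟩) hy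
    · exact Or.inr ⟨⟨hyY, fun hyZ => hy (Or.inl ⟨hyZ, hgt.le.not_gt⟩)⟩, hgt.not_ge⟩

lemma exists_nearly_minimal_separator (hY : IsCompact Y) (hq : 0 < q) (n : ℕ) (R : ℝ) {δ : ℝ≥0}
    (hδ : 0 < δ) :
    ∃ Z F, IsSeparator R Y Z ∧ IsFineCover q Z F ∧ ∀ Z' F', IsSeparator R Y Z' →
      IsFineCover q Z' F' → ballWeight n F < ballWeight n F' + δ := by
  let weights : Set ℝ≥0 :=
    {w | ∃ Z F, IsSeparator R Y Z ∧ IsFineCover q Z F ∧ ballWeight n F = w}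
  have hne : weights.Nonempty := by
    obtain ⟨F, hF⟩ := exists_isFineCover hY hq
    exact ⟨_, Y, F, .refl hY R, hF, rfl⟩
  obtain ⟨_, ⟨Z, F, hZ, hF, rfl⟩, hlt⟩ :=
    exists_lt_of_csInf_lt hne (lt_add_of_pos_right (sInf weights) hδ)
  exact ⟨Z, F, hZ, hF, fun Z' F' hZ' hF' =>
    hlt.trans_le (add_le_add_left (csInf_le' (s := weights) ⟨Z', F', hZ', hF', rfl⟩) δ)⟩

lemma exists_separator_finContent_lt (hY : IsCompact Y) (hq : 0 < q)
    (h : ∀ x ∈ Y, finContent (n + 1) (closedBall x (s + 4 * q) ∩ Y) < (q : ℝ≥0∞) ^ (n + 1)) :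
    ∃ Z, IsSeparator (s + 4 * q) Y Z ∧
      ∀ x ∈ Z, finContent n (closedBall x s ∩ Z) < (q : ℝ≥0∞) ^ n := by
  classical
  obtain ⟨c, hc, hYc⟩ := exists_forall_finContent_lt hY (pow_pos hq (n + 1)) (by exact_mod_cast h)
  have hcq : c / q < q ^ n := (div_lt_iff₀ hq).2 (pow_succ q n ▸ hc)
  obtain ⟨δ, hδ, hcδ⟩ := exists_pos_add_of_lt' hcq
  obtain ⟨Z, F, hZ, hF, hmin⟩ := exists_nearly_minimal_separator hY hq n (s + 4 * q) hδ
  refine ⟨Z, hZ, fun x hx => ?_⟩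
  obtain ⟨t, ht, G, hG, hGc⟩ := exists_isFineCover_sphere hq hc.le (hYc x (hZ.subset hx))
  have hGc : ballWeight n G ≤ c / q := (le_div_iff₀' hq).2 hGc
  set outer : Finset (X × ℝ≥0) := {p ∈ F | t ≤ dist p.1 x + p.2}
  set inner : Finset (X × ℝ≥0) := {p ∈ F | ¬ t ≤ dist p.1 x + p.2}
  have hsplit : ballWeight n outer + ballWeight n inner = ballWeight n F :=
    Finset.sum_filter_add_sum_filter_not F _ _
  have hcut : ballWeight n F < ballWeight n (outer ∪ G) + δ :=
    hmin _ _ (hZ.diff_ball_union_sphere hY x ht.2) ((hF.diff_ball x t).union hG)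
  have hinner : ballWeight n inner < q ^ n := by
    linarith [ballWeight_union_le n outer G]
  exact (finContent_le (hF.closedBall_inter_subset x ht.1.le)).trans_lt (by exact_mod_cast hinner)

theorem exists_isSmallOpenCover_of_finContent_lt (hq : 0 < q) (n : ℕ) (hY : IsCompact Y)
    (h : ∀ x ∈ Y, finContent n (closedBall x (4 * n * q) ∩ Y) < (q : ℝ≥0∞) ^ n) :
    ∃ 𝒰, IsSmallOpenCover (4 * n * q) Y 𝒰 ∧ MultiplicityLE n 𝒰 := by
  induction n generalizing Y with
  | zero =>
    have hempty : Y = ∅ := eq_empty_of_forall_notMem fun x hx =>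
      have hball : closedBall x (4 * (0 : ℕ) * q) ∩ Y = ∅ :=
        eq_empty_of_finContent_zero_lt_one (by simpa only [pow_zero] using h x hx)
      hball.subset ⟨mem_closedBall_self (by simp), hx⟩
    exact ⟨∅, ⟨finite_empty, by simp, by simp, by simp [hempty]⟩, fun y => by simp⟩
  | succ n ih =>
    have hradius : 4 * (n + 1 : ℕ) * (q : ℝ) = 4 * n * q + 4 * q := by push_cast; ring
    rw [hradius] at h ⊢
    obtain ⟨Z, hZ, hZlt⟩ := exists_separator_finContent_lt hY hq h
    obtain ⟨𝒰, h𝒰, h𝒰n⟩ := ih hZ.isCompact hZlt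
    obtain ⟨𝒱, h𝒱, hdisj⟩ := hZ.exists_pieces
    refine ⟨𝒰 ∪ 𝒱, ?_, h𝒰n.union (multiplicityLE_one_of_pairwiseDisjoint hdisj)⟩
    have hcover := (h𝒰.mono_radius (le_add_of_nonneg_right (by positivity))).union h𝒱
    rwa [union_sdiff_cancel hZ.subset] at hcover

end PseudoMetricSpace

section MetricSpace

variable {X : Type*} [MetricSpace X] {Y A : Set X}

/-! ### Comparison with the Hausdorff content -/

lemma exists_gt_coe_pow_lt (a : ℝ≥0) (n : ℕ) {ε : ℝ≥0∞} (hε : 0 < ε) :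
    ∃ b > a, (b : ℝ≥0∞) ^ n < (a : ℝ≥0∞) ^ n + ε := by
  have hcont : Continuous fun b : ℝ≥0 => (b : ℝ≥0∞) ^ n := by fun_prop
  have hlt : (a : ℝ≥0∞) ^ n < (a : ℝ≥0∞) ^ n + ε :=
    ENNReal.lt_add_right (ENNReal.pow_ne_top ENNReal.coe_ne_top) hε.ne'
  have hev : ∀ᶠ b : ℝ≥0 in 𝓝[>] a, (b : ℝ≥0∞) ^ n < (a : ℝ≥0∞) ^ n + ε :=
    nhdsWithin_le_nhds (hcont.continuousAt.eventually_lt_const hlt)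
  exact (eventually_mem_nhdsWithin.and hev).exists

lemma finContent_le_HC (hA : IsCompact A) (n : ℕ) : finContent n A ≤ HC n A := by
  refine le_iInf fun S => le_iInf fun hS => le_iInf fun hAS => ?_
  have : Countable S := hS.to_subtype
  refine ENNReal.le_of_forall_pos_le_add fun ε hε _ => ?_
  obtain ⟨e, he, hsum⟩ :=
    ENNReal.exists_pos_sum_of_countable' (ENNReal.coe_pos.2 hε).ne' S
  choose ρ hlt hρ using fun p : S => exists_gt_coe_pow_lt (p : X × ℝ≥0).2 n (he p)
  have hopen : A ⊆ ⋃ p : S, ball (p : X × ℝ≥0).1 (ρ p) := by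
    refine hAS.trans (iUnion₂_subset fun p hp => ?_)
    exact (closedBall_subset_ball (NNReal.coe_lt_coe.2 (hlt ⟨p, hp⟩))).trans
      (subset_iUnion (fun p : S => ball (p : X × ℝ≥0).1 (ρ p)) ⟨p, hp⟩)
  obtain ⟨T, hT⟩ := hA.elim_finite_subcover _ (fun _ => isOpen_ball) hopen
  calc finContent n A ≤ ∑ p ∈ T, (ρ p : ℝ≥0∞) ^ n := finContent_le_sum T _ ρ hT
    _ ≤ ∑ p ∈ T, (((p : X × ℝ≥0).2 : ℝ≥0∞) ^ n + e p) := Finset.sum_le_sum fun p _ => (hρ p).le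
    _ ≤ ∑' p : S, (((p : X × ℝ≥0).2 : ℝ≥0∞) ^ n + e p) := ENNReal.sum_le_tsum T
    _ = ∑' p : S, ((p : X × ℝ≥0).2 : ℝ≥0∞) ^ n + ∑' p, e p := ENNReal.tsum_add
    _ ≤ ∑' p : S, ((p : X × ℝ≥0).2 : ℝ≥0∞) ^ (n : ℝ) + ε := by
        simp only [ENNReal.rpow_natCast]
        gcongr

theorem stmt3_general (hY : IsCompact Y) {n : ℕ} (hn : 1 ≤ n) {r : ℝ} (hr : 0 < r)
    (hball : ∀ x ∈ Y, HC (n : ℝ) (closedBall x r ∩ Y) < ENNReal.ofReal ((r / (4 * n)) ^ n)) :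
    ∃ r' : ℝ, r' < r ∧ ∃ (k : ℕ) (U : Fin k → Set X),
      (∀ i, ∃ V : Set X, IsOpen V ∧ U i = V ∩ Y) ∧ (Y ⊆ ⋃ i, U i) ∧
      (∀ i, ∃ c : X, U i ⊆ closedBall c r') ∧
      (∀ x : X, {i | x ∈ U i}.encard ≤ n) := by
  have : (0 : ℝ) < n := by exact_mod_cast hn
  have hpos : 0 < r / (4 * n) := by positivity
  obtain ⟨q, hq, rfl⟩ : ∃ q : ℝ≥0, 0 < q ∧ r = 4 * n * q :=
    ⟨.mk (r / (4 * n)) hpos.le, hpos, by rw [NNReal.coe_mk]; field_simp⟩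
  have hquot : 4 * n * (q : ℝ) / (4 * n) = q := by field_simp
  rw [hquot] at hball
  obtain ⟨𝒰, h𝒰, hmult⟩ := exists_isSmallOpenCover_of_finContent_lt hq n hY fun x hx =>
    calc finContent n (closedBall x (4 * n * q) ∩ Y) ≤ HC n (closedBall x (4 * n * q) ∩ Y) :=
          finContent_le_HC (hY.inter_left isClosed_closedBall) n
      _ < ENNReal.ofReal (q ^ n) := hball x hx
      _ = (q : ℝ≥0∞) ^ n := by
          rw [ENNReal.ofReal_pow q.coe_nonneg, ENNReal.ofReal_coe_nnreal]
  exact h𝒰.exists_fin_cover hmult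

end MetricSpace

/-- If `Y` is a compact subset of a metric space `X`, `n ≥ 1`, `r > 0`, and for every
closed ball `B` of radius `r` in `X` one has `HC_n(B ∩ Y) < (r/(4n))^n`, then
`UR_{n-1}(Y) < r`: there are `r' < r` and a finite covering of `Y` by sets open in `Y`,
each contained in a closed ball of `X` of radius `r'`, with multiplicity at most `n`. -/
theorem stmt3 {X : Type*} [MetricSpace X] (Y : Set X) (hY : IsCompact Y)
    (n : ℕ) (hn : 1 ≤ n) (r : ℝ) (hr : 0 < r)
    (hball : ∀ x : X, HC (n : ℝ) (Metric.closedBall x r ∩ Y) <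
      ENNReal.ofReal ((r / (4 * n)) ^ n)) :
    ∃ r' : ℝ, r' < r ∧ ∃ (k : ℕ) (U : Fin k → Set X),
      (∀ i, ∃ V : Set X, IsOpen V ∧ U i = V ∩ Y) ∧ (Y ⊆ ⋃ i, U i) ∧
      (∀ i, ∃ c : X, U i ⊆ Metric.closedBall c r') ∧
      (∀ x : X, {i | x ∈ U i}.encard ≤ n) :=
  stmt3_general hY hn hr fun x _ => hball x
end

section
/- Let X be a metric space, Y a subset of X, and r > 0. Assume that every closed metric ball B of radius r in X satisfies HC_1(B ∩ Y) < r/2. Then UR_0(Y) < r; more precisely, for every x ∈ Y there exists ρ ∈ (0, r) such that the connected component of Y containing x is contained in the open metric ball of radius ρ centered at x. -/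
/-!
Apply the mass distribution principle to the outer measure `A ↦ volume (f '' A)`, where
`f y = dist y x`. Since `f` is 1-Lipschitz, a ball of radius `s` has mass at most `2 * s`, so the
distances from `x` to points of `closedBall x r ∩ Y` form a set of length less than `r` and some
`ρ ∈ (0, r)` is not attained. The sphere of radius `ρ` around `x` thus separates `x` from the part
of `Y` outside `ball x ρ`.
-/

open Metric Set
open scoped ENNReal NNReal

open MeasureTheory

section HausdorffContent

variable {X : Type*} [MetricSpace X]

theorem outerMeasure_div_le_HC (μ : OuterMeasure X) {m : ℝ} {C : ℝ≥0∞}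
    (hμ : ∀ (z : X) (s : ℝ≥0), μ (closedBall z s) ≤ s ^ m * C) (A : Set X) :
    μ A / C ≤ HC m A := by
  refine le_iInf₂ fun S hS => le_iInf fun hcov => ENNReal.div_le_of_le_mul ?_
  calc
    μ A ≤ μ (⋃ p ∈ S, closedBall p.1 (p.2 : ℝ)) := measure_mono hcov
    _ ≤ ∑' p : S, μ (closedBall p.1.1 (p.1.2 : ℝ)) := measure_biUnion_le μ hS _
    _ ≤ ∑' p : S, (p.1.2 : ℝ≥0∞) ^ m * C := ENNReal.tsum_le_tsum fun p => hμ p.1.1 p.1.2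
    _ = (∑' p : S, (p.1.2 : ℝ≥0∞) ^ m) * C := ENNReal.tsum_mul_right

theorem volume_image_div_le_HC {K : ℝ≥0} {f : X → ℝ} (hf : LipschitzWith K f) (A : Set X) :
    volume (f '' A) / (2 * K) ≤ HC 1 A := by
  refine outerMeasure_div_le_HC (OuterMeasure.comap f volume.toOuterMeasure) (fun z s => ?_) A
  calc
    volume (f '' closedBall z s) ≤ volume (closedBall (f z) (K * s)) :=
      measure_mono (hf.mapsTo_closedBall z s).image_subset
    _ = (s : ℝ≥0∞) ^ (1 : ℝ) * (2 * K) := by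
      rw [Real.volume_closedBall, ENNReal.rpow_one, ENNReal.ofReal_mul zero_le_two,
        ENNReal.ofReal_mul K.coe_nonneg, ENNReal.ofReal_coe_nnreal, ENNReal.ofReal_coe_nnreal,
        ENNReal.ofReal_ofNat]
      ring

end HausdorffContent

theorem subset_ball_of_isPreconnected {X : Type*} [PseudoMetricSpace X] {C : Set X} {x : X} {ρ : ℝ}
    (hC : IsPreconnected C) (hx : x ∈ C) (hρ : 0 ≤ ρ) (hmiss : ρ ∉ (dist · x) '' C) :
    C ⊆ ball x ρ := by
  intro y hy
  by_contra hfar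
  refine hmiss (hC.intermediate_value hx hy (by fun_prop) ⟨?_, not_lt.1 hfar⟩)
  rwa [dist_self]

theorem stmt7_general {X : Type*} [MetricSpace X] {Y : Set X} {x : X} {r : ℝ} (hx : x ∈ Y)
    (hball : HC 1 (closedBall x r ∩ Y) < ENNReal.ofReal (r / 2)) :
    ∃ ρ : ℝ, 0 < ρ ∧ ρ < r ∧ connectedComponentIn Y x ⊆ ball x ρ := by
  have hvol : volume ((dist · x) '' (closedBall x r ∩ Y)) < volume (Ioo 0 r) := by
    have hdiv : volume ((dist · x) '' (closedBall x r ∩ Y)) / 2 < ENNReal.ofReal (r / 2) := by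
      simpa only [ENNReal.coe_one, mul_one] using
        (volume_image_div_le_HC (LipschitzWith.dist_left x) _).trans_lt hball
    calc
      volume ((dist · x) '' (closedBall x r ∩ Y)) < ENNReal.ofReal (r / 2) * 2 :=
        (ENNReal.div_lt_iff (.inl two_ne_zero) (.inl ENNReal.ofNat_ne_top)).1 hdiv
      _ = volume (Ioo 0 r) := by
        rw [Real.volume_Ioo, sub_zero, ENNReal.ofReal_div_of_pos two_pos, ENNReal.ofReal_ofNat,
          ENNReal.div_mul_cancel two_ne_zero ENNReal.ofNat_ne_top]
  obtain ⟨ρ, ⟨hρ₀, hρr⟩, hmiss⟩ := not_subset.1 (mt measure_mono hvol.not_ge)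
  refine ⟨ρ, hρ₀, hρr, subset_ball_of_isPreconnected isPreconnected_connectedComponentIn
    (mem_connectedComponentIn hx) hρ₀.le ?_⟩
  rintro ⟨y, hy, rfl⟩
  exact hmiss ⟨y, ⟨hρr.le, connectedComponentIn_subset Y x hy⟩, rfl⟩

/-- If `Y ⊆ X` and every closed ball of radius `r` in `X` satisfies
`HC_1(B ∩ Y) < r/2`, then `UR_0(Y) < r`: for every `x ∈ Y` there is `ρ ∈ (0, r)` such
that the connected component of `Y` containing `x` lies in the open ball `B(x, ρ)`. -/
theorem stmt7 {X : Type*} [MetricSpace X] (Y : Set X) (r : ℝ) (hr : 0 < r)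
    (hball : ∀ x : X, HC 1 (Metric.closedBall x r ∩ Y) < ENNReal.ofReal (r / 2)) :
    ∀ x ∈ Y, ∃ ρ : ℝ, 0 < ρ ∧ ρ < r ∧
      connectedComponentIn Y x ⊆ Metric.ball x ρ :=
  fun x hx => stmt7_general hx (hball x)
end
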